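/- arXiv:1901.06375 — 2 statements merged into one kernel-verified Lean document; each statement's English description precedes it below -/
import Mathlib

section
/- Let s and r be nonzero integers with |s| ≤ 27 and |s| ≠ 24. If q = s/r lies in the open interval (-4, 4), then q is a relation number, i.e., the group generated by a and b_q in SL(2,ℂ) is not free of rank two. -/
/-- `a = [[1,0],[1,1]]` as an element of `SL(2, ℂ)`. -/
def matA : Matrix.SpecialLinearGroup (Fin 2) ℂ :=
  ⟨!![1, 0; 1, 1], by simp [Matrix.det_fin_two_of]⟩

/-- `b_q = [[1,q],[0,1]]` as an element of `SL(2, ℂ)`. -/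
def matB (q : ℂ) : Matrix.SpecialLinearGroup (Fin 2) ℂ :=
  ⟨!![1, q; 0, 1], by simp [Matrix.det_fin_two_of]⟩

/-- `q` is a relation number: the homomorphism `F₂ → SL(2,ℂ)`, `x ↦ a`, `y ↦ b_q`,
is not injective. -/
def IsRelationNumber (q : ℂ) : Prop :=
  ¬ Function.Injective
    (FreeGroup.lift (fun i : Bool => if i then matA else matB q) :
      FreeGroup Bool →* Matrix.SpecialLinearGroup (Fin 2) ℂ)

/-- `q` is an `ℓ`-step relation number: there are `k ≤ ℓ` and nonzero integers
`m_1, …, m_{2k+1}` with `b_q^{m_1} a^{m_2} ⋯ b_q^{m_{2k+1}}` lower triangular. -/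
def IsStepRelationNumber (ℓ : ℕ) (q : ℂ) : Prop :=
  ∃ k : ℕ, k ≤ ℓ ∧ ∃ m : Fin (2 * k + 1) → ℤ, (∀ i, m i ≠ 0) ∧
    ((List.ofFn (fun i : Fin (2 * k + 1) =>
      (if (i : ℕ) % 2 = 0 then matB q else matA) ^ (m i))).prod).val 0 1 = 0

/-- The residue class `w + smℤ` is `s`-good with good representative `w`. -/
def IsGoodRep (s w m : ℤ) : Prop :=
  ∃ y : ℤ, y * (Int.gcd w (s * m) : ℤ) ∣ m * (Int.gcd w s : ℤ) ∧
    (w ∣ s * m * y + (Int.gcd w (s * m) : ℤ) ∨ w ∣ s * m * y - (Int.gcd w (s * m) : ℤ))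

/-!
If a reduced word `g` in `a` and `b_q` that ends in a power of `a` maps `(1, 0)` to a multiple of
`(1, 0)` or of `(0, 1)`, then the conjugate of `b_q` by `g` commutes with `b_q` or with `a`. It does
not do so for `q = 4`, by ping-pong, so this commutation is a nontrivial relation. Finding such a
word at `q = s / r` means finding a sequence of vectors, starting with `(u, 0)`, in which the two
coordinates are changed in turn, by nonzero integer multiples of the other one (times `s / r` for
the first coordinate), until one of them vanishes.

When the successive coordinates are of the form `w` or `w * r` with fixed integers `w`, the same
list of integers works for all `r` in a residue class, outside the zeros of finitely many affine
functions of `r`. For each `s` finitely many such lists suffice, because their residue classes cover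
all integers coprime to `s`; the finitely many remaining `r` have words of their own.
-/

namespace RelationNumber

open FreeGroup (of lift)
open Matrix (SpecialLinearGroup adjugate_fin_two mul_apply)
open Matrix.SpecialLinearGroup (coe_mul coe_inv)

/-- The representation `F₂ → SL(2, ℂ)`, `x ↦ a`, `y ↦ b_q`, whose failure of injectivity defines
relation numbers. The generator `x` is `of true` and `y` is `of false`. -/
noncomputable def rep (q : ℂ) : FreeGroup Bool →* SpecialLinearGroup (Fin 2) ℂ :=
  lift fun i : Bool => if i then matA else matB q

theorem coe_matA_zpow (n : ℤ) : (matA ^ n).val = !![1, 0; (n : ℂ), 1] := by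
  induction n with
  | zero => simp [Matrix.one_fin_two]
  | succ n ih => rw [zpow_add_one, coe_mul, ih]; simp [matA]
  | pred n ih =>
    rw [zpow_sub_one, coe_mul, ih, coe_inv]
    simp [matA, adjugate_fin_two, sub_eq_add_neg]

theorem coe_matB_zpow (q : ℂ) (n : ℤ) : (matB q ^ n).val = !![1, n * q; 0, 1] := by
  induction n with
  | zero => simp [Matrix.one_fin_two]
  | succ n ih =>
    rw [zpow_add_one, coe_mul, ih]
    simp [matB, add_one_mul, add_comm]
  | pred n ih =>
    rw [zpow_sub_one, coe_mul, ih, coe_inv]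
    simp [matB, adjugate_fin_two, sub_eq_add_neg, add_mul, add_comm]

theorem rep_of_true_zpow (q : ℂ) (n : ℤ) : (rep q (of true ^ n)).val = !![1, 0; (n : ℂ), 1] := by
  rw [map_zpow, ← coe_matA_zpow]; simp [rep]

theorem rep_of_false_zpow (q : ℂ) (n : ℤ) : (rep q (of false ^ n)).val = !![1, n * q; 0, 1] := by
  rw [map_zpow, ← coe_matB_zpow]; simp [rep]

theorem rep_of_true (q : ℂ) : (rep q (of true)).val = !![1, 0; 1, 1] := by
  simpa using rep_of_true_zpow q 1

theorem rep_of_false (q : ℂ) : (rep q (of false)).val = !![1, q; 0, 1] := by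
  simpa using rep_of_false_zpow q 1

theorem matB_neg (q : ℂ) : matB (-q) = (matB q)⁻¹ := by
  apply Subtype.ext
  rw [coe_inv]
  simp [matB, adjugate_fin_two]

theorem isRelationNumber_neg {q : ℂ} (h : IsRelationNumber q) : IsRelationNumber (-q) := by
  let invFalse : FreeGroup Bool →* FreeGroup Bool :=
    lift fun i => if i then of true else (of false)⁻¹
  have involutive : Function.Involutive invFalse := fun g =>
    DFunLike.congr_fun (f := invFalse.comp invFalse) (g := .id _)
      (FreeGroup.ext_hom _ _ fun i => by cases i <;> simp [invFalse]) g
  have rep_comp : (rep (-q)).comp invFalse = rep q := by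
    ext i : 1
    cases i <;> simp [invFalse, rep, matB_neg]
  exact fun hinj => h <| by
    change Function.Injective (rep q)
    rw [← rep_comp]
    exact hinj.comp involutive.injective

/-- Reduced words in which nonzero powers of the two generators alternate and whose rightmost
factor is a power of `of true`. The index is the generator of the leftmost factor; the empty word
has index `false`, so that each word is extended on the left by the generator not in its index. -/
inductive AltWord : Bool → FreeGroup Bool → Prop
  | one : AltWord false 1
  | zpow_mul {i : Bool} {g : FreeGroup Bool} {n : ℤ} (hn : n ≠ 0) (hg : AltWord (!i) g) :
      AltWord i (of i ^ n * g)

theorem AltWord.pingPong {p : ℂ} (hp : 4 ≤ ‖p‖) {i : Bool} {g : FreeGroup Bool}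
    (h : AltWord i g) :
    if i then ‖rep p g 0 0‖ < 2 * ‖rep p g 1 0‖
    else 2 * ‖rep p g 1 0‖ < ‖rep p g 0 0‖ := by
  induction h with
  | one => simp
  | @zpow_mul i g n hn _ ih =>
    have one_le_norm : 1 ≤ ‖(n : ℂ)‖ := by
      rw [Complex.norm_intCast]; exact_mod_cast Int.one_le_abs hn
    rw [map_mul, coe_mul]
    set x := rep p g 0 0
    set y := rep p g 1 0
    cases i
    · rw [rep_of_false_zpow]
      have triangle := norm_sub_le (x + n * p * y) x
      rw [add_sub_cancel_left, norm_mul, norm_mul] at triangle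
      have four_le : 4 ≤ ‖(n : ℂ)‖ * ‖p‖ := by nlinarith
      simp only [Bool.not_false, ↓reduceIte, Bool.false_eq_true, mul_apply, Matrix.of_apply,
        Matrix.cons_val', Matrix.cons_val_fin_one, Matrix.cons_val_one, Fin.sum_univ_two,
        Matrix.cons_val_zero, zero_mul, one_mul, zero_add] at ih ⊢
      nlinarith [norm_nonneg y]
    · rw [rep_of_true_zpow]
      have triangle := norm_sub_le (n * x + y) y
      rw [add_sub_cancel_right, norm_mul] at triangle
      simp only [Bool.not_true, Bool.false_eq_true, ↓reduceIte, mul_apply, Matrix.of_apply,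
        Matrix.cons_val', Matrix.cons_val_fin_one, Matrix.cons_val_zero, Fin.sum_univ_two, one_mul,
        Matrix.cons_val_one, zero_mul, add_zero] at ih ⊢
      nlinarith [norm_nonneg x]

theorem rep_conj_of_false (q : ℂ) (g : FreeGroup Bool) :
    (rep q (g * of false * g⁻¹)).val =
      !![1 - q * rep q g 0 0 * rep q g 1 0, q * rep q g 0 0 ^ 2;
        -q * rep q g 1 0 ^ 2, 1 + q * rep q g 0 0 * rep q g 1 0] := by
  have hdet := (rep q g).det_coe
  rw [Matrix.det_fin_two] at hdet
  rw [map_mul, map_mul, map_inv, coe_mul, coe_mul, coe_inv, adjugate_fin_two, rep_of_false,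
    Matrix.eta_fin_two (rep q g).val, Matrix.mul_fin_two, Matrix.mul_fin_two]
  ext i j
  fin_cases i <;> fin_cases j <;>
    simp only [Fin.zero_eta, Fin.mk_one, Matrix.of_apply, Matrix.cons_val', Matrix.cons_val_zero,
      Matrix.cons_val_one, Matrix.cons_val_fin_one] <;>
    first | linear_combination hdet | ring

theorem commute_rep_conj_of_false_iff (q : ℂ) (i : Bool) (g : FreeGroup Bool) :
    Commute (rep q (g * of false * g⁻¹)) (rep q (of !i)) ↔
      q = 0 ∨ rep q g (if i then 1 else 0) 0 = 0 := by
  rw [commute_iff_eq, Matrix.SpecialLinearGroup.ext_iff]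
  simp only [coe_mul, rep_conj_of_false, Fin.forall_fin_two, mul_apply, Fin.sum_univ_two]
  cases i
  · simp only [Bool.not_false, rep_of_true, Bool.false_eq_true, if_false]
    constructor
    · rintro ⟨⟨h, -⟩, -⟩
      simpa using h
    · rintro (h | h) <;> simp [h, add_comm]
  · simp only [Bool.not_true, rep_of_false, if_true]
    constructor
    · rintro ⟨⟨h, -⟩, -⟩
      simpa using h
    · rintro (h | h) <;> simp [h, add_comm]

theorem AltWord.isRelationNumber {q : ℂ} {i : Bool} {g : FreeGroup Bool} (h : AltWord i g)
    (hg : rep q g (if i then 1 else 0) 0 = 0) : IsRelationNumber q := by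
  intro hinj
  have commute_free : Commute (g * of false * g⁻¹) (of !i) :=
    ((commute_rep_conj_of_false_iff q i g).2 (.inr hg)).of_map hinj
  have commute_four := (commute_rep_conj_of_false_iff 4 i g).1 (commute_free.map (rep 4))
  have pingPong_four := h.pingPong (p := 4) (by simp)
  have zero_at_four : rep 4 g (if i then 1 else 0) 0 = 0 := by simpa using commute_four
  cases i
  · simp only [Bool.false_eq_true, if_false] at zero_at_four pingPong_four
    rw [zero_at_four, norm_zero] at pingPong_four
    linarith [norm_nonneg (rep 4 g 1 0)]
  · simp only [if_true] at zero_at_four pingPong_four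
    rw [zero_at_four, norm_zero] at pingPong_four
    linarith [norm_nonneg (rep 4 g 0 0)]

/-- The line spanned by `(x, y)` is the image of the line spanned by `(1, 0)` under a word of
index `i` in `a` and `b_q`. -/
def ReachesLine (q : ℂ) (i : Bool) (x y : ℂ) : Prop :=
  ∃ g, AltWord i g ∧ ∃ c : ℂ, rep q g 0 0 = c * x ∧ rep q g 1 0 = c * y

namespace ReachesLine

variable {q x y : ℂ}

theorem base (q : ℂ) (hx : x ≠ 0) : ReachesLine q false x 0 :=
  ⟨1, .one, x⁻¹, by simp [hx], by simp⟩

theorem of_mul {i : Bool} {t : ℂ} (ht : t ≠ 0) (h : ReachesLine q i x y) :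
    ReachesLine q i (t * x) (t * y) := by
  obtain ⟨g, hg, c, hx, hy⟩ := h
  exact ⟨g, hg, c / t, by rw [hx]; field_simp, by rw [hy]; field_simp⟩

theorem zpow_matA {n : ℤ} (hn : n ≠ 0) (h : ReachesLine q false x y) :
    ReachesLine q true x (y + n * x) := by
  obtain ⟨g, hg, c, hx, hy⟩ := h
  refine ⟨of true ^ n * g, .zpow_mul hn hg, c, ?_, ?_⟩ <;>
    rw [map_mul, coe_mul, rep_of_true_zpow] <;>
    simp [mul_apply, Fin.sum_univ_two, hx, hy]
  ring

theorem zpow_matB {n : ℤ} (hn : n ≠ 0) (h : ReachesLine q true x y) :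
    ReachesLine q false (x + n * q * y) y := by
  obtain ⟨g, hg, c, hx, hy⟩ := h
  refine ⟨of false ^ n * g, .zpow_mul hn hg, c, ?_, ?_⟩ <;>
    rw [map_mul, coe_mul, rep_of_false_zpow] <;>
    simp [mul_apply, Fin.sum_univ_two, hx, hy]
  ring

theorem isRelationNumber_of_true (h : ReachesLine q true x 0) : IsRelationNumber q := by
  obtain ⟨g, hg, c, -, hy⟩ := h
  exact hg.isRelationNumber (by simpa using hy)

theorem isRelationNumber_of_false (h : ReachesLine q false 0 y) : IsRelationNumber q := by
  obtain ⟨g, hg, c, hx, -⟩ := h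
  exact hg.isRelationNumber (by simpa using hx)

end ReachesLine

/-- Integral coordinates on the lines reached at `q = s / r`: `u` is the coordinate that the next
letter leaves unchanged, `p` the other one. The factor `r` makes the roles of the two letters
symmetric: a power of `a` changes `p` by a multiple of `u`, a power of `b_q` by a multiple of
`s * u`. -/
def Reaches (s r : ℤ) : Bool → ℤ → ℤ → Prop
  | false, u, p => ReachesLine (s / r) false u p
  | true, u, p => ReachesLine (s / r) true p (u * r)

/-- In the coordinates of `Reaches`, the letter that extends a word of index `i` changes `p` by
`multiplier s i * u`. -/
def multiplier (s : ℤ) (i : Bool) : ℤ := if i then s else 1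

namespace Reaches

variable {s r : ℤ} {i : Bool} {u p : ℤ}

theorem isRelationNumber (h : Reaches s r i 0 p) : IsRelationNumber (s / r) := by
  cases i
  · exact ReachesLine.isRelationNumber_of_false (by simpa [Reaches] using h)
  · exact ReachesLine.isRelationNumber_of_true (by simpa [Reaches] using h)

theorem step (hr : r ≠ 0) (h : Reaches s r i u p) {w n : ℤ} {e f : ℕ} (hef : e + f = 1)
    (hn : n ≠ 0) (hw : w * r ^ e - p = multiplier s i * u * n) :
    Reaches s r (!i) w (u * r ^ f) := by
  have hr' : (r : ℂ) ≠ 0 := mod_cast hr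
  have hw' : (w * r ^ e : ℂ) = p + multiplier s i * u * n := by
    exact_mod_cast (by linear_combination hw : w * r ^ e = p + multiplier s i * u * n)
  have hpow : (r : ℂ) ^ f * r ^ e = r := by rw [← pow_add, add_comm, hef, pow_one]
  cases i
  · have h' := (ReachesLine.zpow_matA hn h).of_mul (pow_ne_zero f hr')
    simp only [Bool.not_false, Reaches, Int.cast_mul, Int.cast_pow]
    convert h' using 1
    · ring
    · simp only [multiplier, Bool.false_eq_true, if_false, Int.cast_one, one_mul] at hw'
      linear_combination r ^ f * hw' - w * hpow
  · have h' := (ReachesLine.zpow_matB hn h).of_mul (inv_ne_zero (pow_ne_zero e hr'))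
    simp only [Bool.not_true, Reaches, Int.cast_mul, Int.cast_pow]
    convert h' using 1
    · field_simp
      simp only [multiplier, if_true] at hw'
      linear_combination hw'
    · field_simp
      linear_combination u * hpow

end Reaches

/-- The affine function with slope `c.1` and constant term `c.2`. -/
def affine (c : ℤ × ℤ) (r : ℤ) : ℤ := c.1 * r + c.2

/-- The coefficients of the affine function `r ↦ v * r ^ e`, where `e` is `1` if `τ` and `0`
otherwise. -/
def monomialCoeffs (τ : Bool) (v : ℤ) : ℤ × ℤ := if τ then (v, 0) else (0, v)

theorem affine_monomialCoeffs (τ : Bool) (v r : ℤ) :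
    affine (monomialCoeffs τ v) r = v * r ^ τ.toNat := by
  cases τ <;> simp [affine, monomialCoeffs]

theorem affine_sub (c d : ℤ × ℤ) (r : ℤ) : affine (c - d) r = affine c r - affine d r := by
  simp only [affine, Prod.fst_sub, Prod.snd_sub]; ring

/-- A set of denominators `r` for which a single word is to show that `numerator / r` is a
relation number: a residue class, within the range `numerator < 4 * |r|`, without finitely many
absolute values. The modulus `0` is used for a single denominator. -/
structure DenominatorClass where
  numerator : ℤ
  residue : ℤ
  modulus : ℤ
  exceptions : List ℕ

namespace DenominatorClass

variable (D : DenominatorClass)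

/-- Membership of a denominator in the set described by a `DenominatorClass`. -/
def Contains (r : ℤ) : Prop :=
  D.modulus ∣ r - D.residue ∧ D.numerator < 4 * |r| ∧ r.natAbs ∉ D.exceptions

instance (r : ℤ) : Decidable (D.Contains r) := inferInstanceAs (Decidable (_ ∧ _ ∧ _))

/-- A test for `d` to divide the values of an affine function on `D`. -/
def DvdAffine (d : ℤ) (c : ℤ × ℤ) : Prop := d ∣ affine c D.residue ∧ d ∣ c.1 * D.modulus

instance (d : ℤ) (c : ℤ × ℤ) : Decidable (D.DvdAffine d c) := inferInstanceAs (Decidable (_ ∧ _))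

/-- A test for an affine function to have no zero on `D`. If its slope is nonzero, then
`-c.2 / c.1` (rounded) is the only possible zero in `ℤ`. -/
def AffineNeZero (c : ℤ × ℤ) : Prop :=
  affine c (-c.2 / c.1) ≠ 0 ∨ c.1 ≠ 0 ∧ ¬ D.Contains (-c.2 / c.1)

instance (c : ℤ × ℤ) : Decidable (D.AffineNeZero c) := inferInstanceAs (Decidable (_ ∨ _ ∧ _))

/-- Runs a word on the state `Reaches D.numerator r i u (affine p r)`, simultaneously for all `r`
in `D`. Each entry `w` of the list stands for the step that changes `affine p r` to `w` or `w * r`,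
whichever is possible, and the run succeeds if it ends with the entry `0`. -/
def leadsToZero : List ℤ → Bool → ℤ → ℤ × ℤ → Bool
  | [], _, u, _ => u == 0
  | w :: ws, i, u, p => [false, true].any fun τ =>
      D.DvdAffine (multiplier D.numerator i * u) (monomialCoeffs τ w - p) &&
      D.AffineNeZero (monomialCoeffs τ w - p) &&
      leadsToZero ws (!i) w (monomialCoeffs (!τ) u)

/-- The word given by a list proves that `D.numerator / r` is a relation number for all `r` in `D`.
The head of the list is the first coordinate of the initial vector `(u, 0)`. -/
def isSolvedBy : List ℤ → Bool
  | [] => false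
  | u :: ws => u != 0 && D.leadsToZero ws false u (0, 0)

variable {D} {c : ℤ × ℤ} {r : ℤ}

theorem DvdAffine.dvd {d : ℤ} (h : D.DvdAffine d c) (hr : D.Contains r) : d ∣ affine c r := by
  have decompose : affine c r = affine c D.residue + c.1 * (r - D.residue) := by
    simp only [affine]; ring
  rw [decompose]
  exact dvd_add h.1 (h.2.trans (mul_dvd_mul_left c.1 hr.1))

theorem AffineNeZero.ne_zero (h : D.AffineNeZero c) (hr : D.Contains r) : affine c r ≠ 0 := by
  intro hzero
  have hconst : -c.2 = c.1 * r := by simp only [affine] at hzero; linarith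
  by_cases hslope : c.1 = 0
  · simp_all [AffineNeZero, affine]
  · have hroot : -c.2 / c.1 = r := by rw [hconst, Int.mul_ediv_cancel_left r hslope]
    rw [AffineNeZero, hroot] at h
    exact h.elim (· hzero) (·.2 hr)

theorem isRelationNumber_of_leadsToZero (hr₀ : r ≠ 0) (hr : D.Contains r) {ws : List ℤ} {i : Bool}
    {u : ℤ} {p : ℤ × ℤ} (hword : D.leadsToZero ws i u p)
    (hreach : Reaches D.numerator r i u (affine p r)) : IsRelationNumber (D.numerator / r) := by
  induction ws generalizing i u p with
  | nil =>
    obtain rfl : u = 0 := by simpa [leadsToZero] using hword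
    exact hreach.isRelationNumber
  | cons w ws ih =>
    simp only [leadsToZero, List.any_eq_true, Bool.and_eq_true, decide_eq_true_eq] at hword
    obtain ⟨τ, -, ⟨hdvd, hne⟩, htail⟩ := hword
    obtain ⟨n, hn⟩ := hdvd.dvd hr
    have hn₀ : n ≠ 0 := by
      rintro rfl
      exact hne.ne_zero hr (by rw [hn, mul_zero])
    rw [affine_sub, affine_monomialCoeffs] at hn
    refine ih htail ?_
    rw [affine_monomialCoeffs]
    exact hreach.step hr₀ (by cases τ <;> rfl) hn₀ hn

theorem isRelationNumber_of_isSolvedBy (hr₀ : r ≠ 0) (hr : D.Contains r) {ws : List ℤ}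
    (h : D.isSolvedBy ws) : IsRelationNumber (D.numerator / r) := by
  cases ws with
  | nil => simp [isSolvedBy] at h
  | cons u ws =>
    simp only [isSolvedBy, Bool.and_eq_true, bne_iff_ne] at h
    refine isRelationNumber_of_leadsToZero hr₀ hr h.2 ?_
    simpa [Reaches, affine] using ReachesLine.base (D.numerator / r) (mod_cast h.1 : (u : ℂ) ≠ 0)

end DenominatorClass

/-- A word together with a residue class of integers `t`, which parametrizes the denominators
`ρ + s * t` that the word is meant for. -/
structure ClassWord where
  residue : ℕ
  modulus : ℕ
  word : List ℤ

/-- The residue class of `t` modulo `M` lies in the residue class of a member of `L`. -/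
def isInClass (L : List ClassWord) (t M : ℕ) : Bool :=
  L.any fun c => c.modulus ∣ M && t % c.modulus == c.residue

theorem exists_mem_modEq_of_isInClass {L : List ClassWord} {t M : ℕ} (h : isInClass L t M) {n : ℤ}
    (hn : n ≡ t [ZMOD M]) : ∃ c ∈ L, n ≡ c.residue [ZMOD c.modulus] := by
  simp only [isInClass, List.any_eq_true, Bool.and_eq_true, decide_eq_true_eq, beq_iff_eq] at h
  obtain ⟨c, hc, hdvd, hres⟩ := h
  refine ⟨c, hc, (hn.of_dvd (mod_cast hdvd)).trans ?_⟩
  rw [← hres, Int.natCast_mod]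
  exact (Int.mod_modEq _ _).symm

/-- A search for a proof that the residue class of `t` modulo `M` is covered by the residue classes
of the members of `L`. A class that is not contained in a single one of them is split into
`p` classes modulo `M * p`, for the successive factors `p` in the list. -/
def covers (L : List ClassWord) : List ℕ → ℕ → ℕ → Bool
  | [], t, M => isInClass L t M
  | p :: ps, t, M => isInClass L t M ||
      p != 0 && (List.range p).all fun i => covers L ps (t + M * i) (M * p)

theorem exists_lt_modEq_add_mul {n : ℤ} {t M p : ℕ} (hp : p ≠ 0) (hn : n ≡ t [ZMOD M]) :
    ∃ i < p, n ≡ (t + M * i : ℕ) [ZMOD (M * p : ℕ)] := by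
  obtain ⟨j, hj⟩ := hn.symm.dvd
  have mod_nonneg : 0 ≤ j % p := Int.emod_nonneg j (mod_cast hp)
  refine ⟨(j % p).toNat, ?_, ?_⟩
  · have := Int.emod_lt_of_pos j (by positivity : (0 : ℤ) < p)
    omega
  · have split : n = t + M * j := by linarith
    push_cast
    rw [Int.toNat_of_nonneg mod_nonneg, split]
    exact (Int.mod_modEq j p).symm.mul_left'.add_left _

theorem exists_mem_modEq_of_covers {L : List ClassWord} {factors : List ℕ} {t M : ℕ}
    (h : covers L factors t M) {n : ℤ} (hn : n ≡ t [ZMOD M]) :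
    ∃ c ∈ L, n ≡ c.residue [ZMOD c.modulus] := by
  induction factors generalizing t M with
  | nil => exact exists_mem_modEq_of_isInClass h hn
  | cons p ps ih =>
    simp only [covers, Bool.or_eq_true, Bool.and_eq_true, bne_iff_ne, List.all_eq_true,
      List.mem_range] at h
    obtain h | ⟨hp, h⟩ := h
    · exact exists_mem_modEq_of_isInClass h hn
    · obtain ⟨i, hi, hmod⟩ := exists_lt_modEq_add_mul hp hn
      exact ih (h i hi) hmod

section Residues

variable {s : ℕ} {r : ℤ}

theorem ne_zero_of_natCast_lt_four_mul_abs (hr : s < 4 * |r|) : r ≠ 0 := by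
  rintro rfl
  simp only [abs_zero, mul_zero] at hr
  omega

theorem exists_le_half_dvd_sub_or_dvd_neg_sub (r : ℤ) (hs : 0 < s) :
    ∃ ρ ≤ s / 2, (s : ℤ) ∣ r - ρ ∨ (s : ℤ) ∣ -r - ρ := by
  have hle := Int.le_bmod (x := r) hs
  have hlt := Int.bmod_lt (x := r) hs
  have hdvd := Int.dvd_self_sub_bmod (x := r) (m := s)
  refine ⟨(r.bmod s).natAbs, by omega, ?_⟩
  obtain hpos | hneg := Int.natAbs_eq (r.bmod s)
  · left; rwa [← hpos]
  · right
    rw [hneg, sub_neg_eq_add] at hdvd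
    simpa [neg_add_eq_sub, ← sub_eq_add_neg, add_comm] using hdvd.neg_right

theorem natCoprime_of_dvd_sub {ρ : ℕ} (hco : IsCoprime (s : ℤ) r) (h : (s : ℤ) ∣ r - ρ) :
    ρ.Coprime s := by
  obtain ⟨t, ht⟩ := h
  rw [← Nat.isCoprime_iff_coprime, isCoprime_comm]
  rw [show (ρ : ℤ) = r + s * -t by linarith]
  exact hco.add_mul_left_right _

end Residues

/-- The factors by which residue classes are split to check the coverings of a `Certificate`. -/
def splittingFactors : List ℕ := [2, 3, 2, 5, 7, 3, 2, 2, 11, 3, 2]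

/-- Words showing that `s / r` is a relation number for all `r` coprime to a fixed `s` with
`|s / r| < 4`. The denominators are treated by `families` according to their residue `ρ` modulo
`s`, up to sign, except for finitely many absolute values, which are treated by `exceptions`. -/
structure Certificate where
  exceptions : List (ℕ × List ℤ)
  families : List (ℕ × List ClassWord)

namespace Certificate

/-- The denominators `ρ + s * t` to which a member of the family of `ρ` applies. -/
def denominators (C : Certificate) (s ρ : ℕ) (c : ClassWord) : DenominatorClass where
  numerator := s
  residue := ρ + s * c.residue
  modulus := s * c.modulus
  exceptions := C.exceptions.map Prod.fst

/-- All words for the residue `ρ` do what they are meant for, and their classes cover `ℤ`. -/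
def familyIsValid (C : Certificate) (s ρ : ℕ) (L : List ClassWord) : Bool :=
  (L.all fun c => (C.denominators s ρ c).isSolvedBy c.word) && covers L splittingFactors 0 1

/-- The words of a certificate for `s` do what they are meant for, and there are enough of them. -/
def isValid (C : Certificate) (s : ℕ) : Bool :=
  (C.exceptions.all fun e => (⟨s, e.1, 0, []⟩ : DenominatorClass).isSolvedBy e.2) &&
  (List.range (s / 2 + 1)).all fun ρ =>
    ρ.gcd s != 1 || C.families.any fun f => f.1 == ρ && C.familyIsValid s ρ f.2

variable {C : Certificate} {s : ℕ} {r : ℤ}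

theorem isRelationNumber_of_mem_exceptions (h : C.isValid s) (hr : s < 4 * |r|)
    (hmem : r.natAbs ∈ C.exceptions.map Prod.fst) : IsRelationNumber (s / r) := by
  obtain ⟨⟨m, word⟩, he, hm : m = r.natAbs⟩ := List.mem_map.1 hmem
  simp only [isValid, Bool.and_eq_true, List.all_eq_true] at h
  have hlt : s < 4 * |(m : ℤ)| := by simpa [hm] using hr
  have isRelationNumber_natAbs : IsRelationNumber (s / m) := by
    simpa using DenominatorClass.isRelationNumber_of_isSolvedBy
      (ne_zero_of_natCast_lt_four_mul_abs hlt) ⟨by simp, hlt, by simp⟩ (h.1 _ he)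
  obtain hpos | hneg : r = m ∨ r = -m := by omega
  · simpa [hpos] using isRelationNumber_natAbs
  · simpa [hneg, div_neg] using isRelationNumber_neg isRelationNumber_natAbs

theorem isRelationNumber_of_familyIsValid {ρ : ℕ} {L : List ClassWord}
    (h : C.familyIsValid s ρ L) (hr : s < 4 * |r|) (hexc : r.natAbs ∉ C.exceptions.map Prod.fst)
    (hρ : (s : ℤ) ∣ r - ρ) : IsRelationNumber (s / r) := by
  simp only [familyIsValid, Bool.and_eq_true, List.all_eq_true] at h
  obtain ⟨t, ht⟩ := hρ
  obtain ⟨c, hc, hmod⟩ := exists_mem_modEq_of_covers h.2 (n := t) (Int.modEq_one)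
  have hdvd : (s * c.modulus : ℤ) ∣ r - (ρ + s * c.residue) := by
    rw [← sub_sub, ht, ← mul_sub]
    exact mul_dvd_mul_left _ hmod.symm.dvd
  simpa [denominators] using DenominatorClass.isRelationNumber_of_isSolvedBy
    (ne_zero_of_natCast_lt_four_mul_abs hr) ⟨hdvd, hr, hexc⟩ (h.1 c hc)

theorem exists_familyIsValid (h : C.isValid s) {ρ : ℕ} (hρ : ρ ≤ s / 2) (hco : ρ.Coprime s) :
    ∃ L, C.familyIsValid s ρ L := by
  simp only [isValid, Bool.and_eq_true, List.all_eq_true, List.mem_range, Bool.or_eq_true,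
    bne_iff_ne, List.any_eq_true, beq_iff_eq] at h
  obtain ⟨f, -, -, hf⟩ := (h.2 ρ (by omega)).resolve_left (not_not.2 hco)
  exact ⟨f.2, hf⟩

theorem isRelationNumber (h : C.isValid s) (hs : 0 < s) (hco : IsCoprime (s : ℤ) r)
    (hr : s < 4 * |r|) : IsRelationNumber (s / r) := by
  by_cases hexc : r.natAbs ∈ C.exceptions.map Prod.fst
  · exact isRelationNumber_of_mem_exceptions h hr hexc
  obtain ⟨ρ, hρ, hdvd | hdvd⟩ := exists_le_half_dvd_sub_or_dvd_neg_sub r hs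
  · obtain ⟨L, hL⟩ := exists_familyIsValid h hρ (natCoprime_of_dvd_sub hco hdvd)
    exact isRelationNumber_of_familyIsValid hL hr hexc hdvd
  · obtain ⟨L, hL⟩ := exists_familyIsValid h hρ (natCoprime_of_dvd_sub hco.neg_right hdvd)
    have isRelationNumber_div_neg : IsRelationNumber (s / (-r : ℤ)) :=
      isRelationNumber_of_familyIsValid hL (by rwa [abs_neg]) (by rwa [Int.natAbs_neg]) hdvd
    simpa [div_neg] using isRelationNumber_neg isRelationNumber_div_neg

end Certificate

-- The words in the following certificates were found by a computer search.

theorem exists_certificate_1 : ∃ C : Certificate, C.isValid 1 := ⟨{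
    exceptions := []
    families := [
      (0, [⟨0, 1, [1, -1, 0]⟩])] },
  by decide +kernel⟩

theorem exists_certificate_2 : ∃ C : Certificate, C.isValid 2 := ⟨{
    exceptions := []
    families := [
      (1, [⟨0, 1, [1, -1, -1, 0]⟩])] },
  by decide +kernel⟩

theorem exists_certificate_3 : ∃ C : Certificate, C.isValid 3 := ⟨{
    exceptions := []
    families := [
      (1, [⟨0, 1, [1, -1, -2, 1, 1, 0]⟩])] },
  by decide +kernel⟩

theorem exists_certificate_4 : ∃ C : Certificate, C.isValid 4 := ⟨{
    exceptions := []
    families := [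
      (1, [⟨0, 1, [1, -1, 1, 0]⟩])] },
  by decide +kernel⟩

theorem exists_certificate_5 : ∃ C : Certificate, C.isValid 5 := ⟨{
    exceptions := []
    families := [
      (1, [⟨0, 1, [1, -1, 1, 0]⟩]),
      (2, [⟨0, 1, [1, -1, -2, 1, 1, 0]⟩])] },
  by decide +kernel⟩

theorem exists_certificate_6 : ∃ C : Certificate, C.isValid 6 := ⟨{
    exceptions := []
    families := [
      (1, [⟨0, 1, [1, -1, 1, 0]⟩])] },
  by decide +kernel⟩

theorem exists_certificate_7 : ∃ C : Certificate, C.isValid 7 := ⟨{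
    exceptions := []
    families := [
      (1, [⟨0, 1, [1, -1, 1, 0]⟩]),
      (2, [⟨1, 2, [1, -1, 2, 1, 1, 0]⟩, ⟨0, 2, [1, -2, -6, 4, 8, -4, -6, 2, 1, 0]⟩]),
      (3, [⟨0, 1, [1, -1, -2, 1, 1, 0]⟩])] },
  by decide +kernel⟩

theorem exists_certificate_8 : ∃ C : Certificate, C.isValid 8 := ⟨{
    exceptions := []
    families := [
      (1, [⟨0, 1, [1, -1, 1, 0]⟩]),
      (3, [
        ⟨0, 3, [1, -6, -15, 9, 9, 0]⟩, ⟨1, 3, [1, -1, 3, 1, 1, 0]⟩,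
        ⟨2, 3, [1, -1, 3, -1, 1, 0]⟩])] },
  by decide +kernel⟩

theorem exists_certificate_9 : ∃ C : Certificate, C.isValid 9 := ⟨{
    exceptions := []
    families := [
      (1, [⟨0, 1, [1, -1, 1, 0]⟩]),
      (2, [⟨0, 1, [1, -1, 2, 1, 1, 0]⟩]),
      (4, [⟨0, 1, [1, -1, -2, 1, 1, 0]⟩])] },
  by decide +kernel⟩

theorem exists_certificate_10 : ∃ C : Certificate, C.isValid 10 := ⟨{
    exceptions := []
    families := [
      (1, [⟨0, 1, [1, -1, 1, 0]⟩]),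
      (3, [
        ⟨0, 3, [1, -6, 21, 36, -99, -63, 111, 48, -49, -1, 1, 0]⟩,
        ⟨1, 3, [1, -1, 3, -1, -1, 0]⟩, ⟨2, 3, [1, -1, 3, 1, -1, 0]⟩])] },
  by decide +kernel⟩

theorem exists_certificate_11 : ∃ C : Certificate, C.isValid 11 := ⟨{
    exceptions := []
    families := [
      (1, [⟨0, 1, [1, -1, 1, 0]⟩]),
      (2, [⟨0, 1, [1, -1, 2, 1, 1, 0]⟩]),
      (3, [
        ⟨2, 3, [1, -3, 4, 1, 1, 0]⟩,
        ⟨0, 3, [1, -3, -21, 18, 45, -27, -54, 27, 45, -18, -21, 3, 1, 0]⟩,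
        ⟨1, 3, [1, -1, 3, 1, -2, -1, 3, 1, 1, 0]⟩]),
      (4, [
        ⟨2, 3, [1, -1, 3, 1, -2, -1, 3, 1, 1, 0]⟩, ⟨0, 3, [1, -1, 3, -1, -2, 1, 3, 1, 1, 0]⟩,
        ⟨1, 3, [1, -1, 12, 3, 3, 0]⟩]),
      (5, [⟨0, 1, [1, -1, -2, 1, 1, 0]⟩])] },
  by decide +kernel⟩

theorem exists_certificate_12 : ∃ C : Certificate, C.isValid 12 := ⟨{
    exceptions := [
      (7, [1, -1, -5, 3, 1, 0])]
    families := [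
      (1, [⟨0, 1, [1, -1, 1, 0]⟩]),
      (5, [
        ⟨2, 5, [1, -1, 5, 1, 1, 0]⟩, ⟨0, 5, [1, -35, 85, 50, -35, 15, 1, 0]⟩,
        ⟨3, 5, [1, -1, 5, -1, 1, 0]⟩, ⟨4, 10, [1, -2, 5, -1, 1, 0]⟩,
        ⟨6, 10, [1, -2, 5, 1, 1, 0]⟩, ⟨9, 10, [1, -5, -7, 2, 1, 0]⟩,
        ⟨1, 10, [1, -5, -7, 2, 1, 0]⟩])] },
  by decide +kernel⟩

theorem exists_certificate_13 : ∃ C : Certificate, C.isValid 13 := ⟨{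
    exceptions := [
      (5, [1, -1, -8, 3, -1, 0])]
    families := [
      (1, [⟨0, 1, [1, -1, 1, 0]⟩]),
      (2, [⟨0, 1, [1, -1, 2, 1, 1, 0]⟩]),
      (3, [⟨1, 2, [2, -2, 6, 1, 2, -1, 6, 2, 2, 0]⟩, ⟨0, 2, [1, -2, 3, 1, 1, 0]⟩]),
      (4, [
        ⟨1, 2, [1, -2, -3, 1, 1, 0]⟩, ⟨0, 4, [1, -36, -116, 80, 144, -64, -64, 0]⟩,
        ⟨2, 4, [1, -2, 4, 0]⟩]),
      (5, [
        ⟨1, 2, [2, -2, 3, 1, 2, 0]⟩, ⟨2, 4, [1, -4, -5, 1, 1, 0]⟩, ⟨0, 4, [1, -4, 5, 1, 1, 0]⟩]),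
      (6, [⟨0, 1, [1, -1, -2, 1, 1, 0]⟩])] },
  by decide +kernel⟩

theorem exists_certificate_14 : ∃ C : Certificate, C.isValid 14 := ⟨{
    exceptions := []
    families := [
      (1, [⟨0, 1, [1, -1, 1, 0]⟩]),
      (3, [
        ⟨0, 2, [1, -2, 3, 1, 1, 0]⟩, ⟨3, 5, [1, -5, 15, 25, -25, 0]⟩,
        ⟨0, 5, [1, -5, 3, 1, 1, 0]⟩, ⟨9, 10, [1, -2, 5, 2, -3, -1, 5, 1, 1, 0]⟩,
        ⟨7, 10, [1, -2, 5, -2, -3, 1, 5, 1, 1, 0]⟩, ⟨1, 10, [1, -2, 5, -1, -3, 2, 5, -1, 1, 0]⟩]),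
      (5, [
        ⟨1, 2, [1, -2, 3, 1, 1, 0]⟩, ⟨0, 5, [1, -10, 85, 75, -125, -50, 15, -5, 1, 0]⟩,
        ⟨3, 5, [1, -5, 3, 1, 1, 0]⟩, ⟨2, 10, [1, -2, 5, -1, -3, 2, 5, -1, 1, 0]⟩,
        ⟨4, 10, [1, -2, 5, -2, -3, 1, 5, 1, 1, 0]⟩, ⟨6, 10, [1, -10, -11, 1, 1, 0]⟩])] },
  by decide +kernel⟩

theorem exists_certificate_15 : ∃ C : Certificate, C.isValid 15 := ⟨{
    exceptions := [
      (4, [1, -2, -14, 10, 34, -6, -14, 2, 4, -2, -14, 6, 34, -10, -14, 2, 1, 0])]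
    families := [
      (1, [⟨0, 1, [1, -1, 1, 0]⟩]),
      (2, [⟨0, 1, [1, -1, 2, 1, 1, 0]⟩]),
      (4, [⟨0, 2, [1, -2, 4, 0]⟩, ⟨1, 4, [1, -1, 4, 1, 1, 0]⟩, ⟨3, 4, [1, -1, 4, -1, 1, 0]⟩]),
      (7, [⟨0, 1, [1, -1, -2, 1, 1, 0]⟩])] },
  by decide +kernel⟩

theorem exists_certificate_16 : ∃ C : Certificate, C.isValid 16 := ⟨{
    exceptions := [
      (7, [1, -1, -9, 2, 1, 0]),
      (9, [1, -3, -15, -2, 17, -1, 1, 0])]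
    families := [
      (1, [⟨0, 1, [1, -1, 1, 0]⟩]),
      (3, [
        ⟨0, 2, [1, -2, 3, 1, 1, 0]⟩, ⟨0, 3, [1, -3, 3, 0]⟩, ⟨0, 5, [1, -5, 3, 1, 1, 0]⟩,
        ⟨2, 5, [1, -5, -15, 25, -125, 0]⟩, ⟨1, 6, [1, -6, -5, -1, 1, 0]⟩,
        ⟨1, 10, [1, -1, -5, 1, 9, 10, 11, -1, -5, 1, 1, 0]⟩,
        ⟨23, 30, [1, -1, 3, -5, -7, 2, 3, 1, 1, 0]⟩, ⟨29, 30, [1, -1, 3, 2, -15, 1, 1, 0]⟩]),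
      (5, [
        ⟨1, 2, [1, -2, -3, 1, 1, 0]⟩, ⟨0, 5, [1, -1, -19, -20, 45, 25, -35, -10, -3, -1, 1, 0]⟩,
        ⟨3, 5, [1, -5, -3, 1, 1, 0]⟩, ⟨4, 6, [1, -1, -15, -6, -3, 0]⟩,
        ⟨6, 10, [1, -1, 5, -1, -11, 10, 9, 1, 5, 1, 1, 0]⟩, ⟨6, 12, [1, -6, 5, -1, 1, 0]⟩,
        ⟨9, 15, [1, -1, -15, 1, 1, 0]⟩, ⟨12, 20, [1, -4, 5, 1, 1, 0]⟩,
        ⟨2, 30, [1, -15, 13, -2, 1, 0]⟩, ⟨14, 30, [1, -1, 5, 1, -7, -6, 5, 1, 1, 0]⟩]),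
      (7, [
        ⟨2, 3, [1, -3, -9, 0]⟩, ⟨3, 5, [1, -5, -15, 25, -25, 0]⟩, ⟨3, 6, [1, -6, 7, 1, 1, 0]⟩,
        ⟨0, 6, [1, -6, 7, 1, 1, 0]⟩, ⟨9, 10, [1, -10, -9, -1, 1, 0]⟩,
        ⟨1, 10, [1, -5, 7, 2, 1, 0]⟩, ⟨0, 10, [1, -5, 7, 2, 1, 0]⟩,
        ⟨4, 10, [1, -10, -9, -1, 1, 0]⟩, ⟨7, 15, [1, -1, -15, 1, 1, 0]⟩,
        ⟨25, 30, [1, -5, 7, 2, -15, 1, 1, 0]⟩, ⟨16, 30, [1, -2, 7, -30, -31, 1, 1, 0]⟩])] },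
  by decide +kernel⟩

theorem exists_certificate_17 : ∃ C : Certificate, C.isValid 17 := ⟨{
    exceptions := [
      (5, [1, -2, 7, 1, -2, -1, 7, 2, 1, 0]),
      (6, [1, -3, -45, 27, 108, -81, 567, 81, -135, -9, 3, 0]),
      (7, [1, -2, 5, -1, 8, 1, 6, 1, -4, -1, -3, 2, 13, 1, 6, 1, 8, -1, 5, -2, 1, 0])]
    families := [
      (1, [⟨0, 1, [1, -1, 1, 0]⟩]),
      (2, [⟨0, 1, [1, -1, 2, 1, 1, 0]⟩]),
      (3, [⟨1, 2, [2, -2, 6, 1, 2, -1, 6, 2, 2, 0]⟩, ⟨0, 2, [1, -2, 3, 1, 1, 0]⟩]),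
      (4, [
        ⟨0, 3, [1, -3, 4, 1, 1, 0]⟩, ⟨2, 3, [1, -3, -4, 1, 1, 0]⟩,
        ⟨1, 3, [1, -1, -4, 3, 18, -3, -4, 1, 1, 0]⟩]),
      (5, [
        ⟨1, 2, [2, -2, -3, 1, 2, 0]⟩, ⟨2, 3, [3, -3, 4, 1, 3, 0]⟩, ⟨0, 6, [1, -6, 5, -1, 1, 0]⟩,
        ⟨4, 6, [1, -6, 7, 1, 1, 0]⟩]),
      (6, [⟨1, 2, [1, -2, 3, 1, 1, 0]⟩, ⟨0, 2, [1, -2, 6, 1, 1, 0]⟩]),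
      (7, [
        ⟨1, 3, [3, -3, -2, -1, 3, 0]⟩, ⟨1, 4, [1, -1, 5, 4, -16, 0]⟩,
        ⟨3, 4, [4, -2, 3, 1, 4, -1, 3, 2, 4, 0]⟩, ⟨2, 6, [1, -6, 5, -1, 1, 0]⟩,
        ⟨0, 6, [1, -6, 7, 1, 1, 0]⟩]),
      (8, [⟨0, 1, [1, -1, -2, 1, 1, 0]⟩])] },
  by decide +kernel⟩

theorem exists_certificate_18 : ∃ C : Certificate, C.isValid 18 := ⟨{
    exceptions := [
      (5, [
        1, -3, 11, 6, -41, -7, 17, 2, -19, -9, 67, 22, -61, -12, -89, 29, 77, -9, 61, 16, 17, -1,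
        -1, 0]),
      (7, [1, -2, -5, 4, -11, -1, 1, 0]),
      (11, [1, -1, -7, -4, -5, 1, -1, 0])]
    families := [
      (1, [⟨0, 1, [1, -1, 1, 0]⟩]),
      (5, [
        ⟨0, 4, [1, -4, 5, 1, 1, 0]⟩, ⟨0, 5, [1, -5, 5, 0]⟩, ⟨4, 6, [1, -6, -7, 1, 1, 0]⟩,
        ⟨0, 6, [1, -6, 5, -1, 1, 0]⟩, ⟨4, 7, [1, -14, -35, -49, -49, 0]⟩,
        ⟨7, 10, [1, -10, 11, 1, 1, 0]⟩, ⟨4, 10, [1, -5, -7, 2, 1, 0]⟩,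
        ⟨3, 12, [1, -12, 11, -1, 1, 0]⟩, ⟨11, 20, [1, -1, -7, 20, 19, 1, 1, 0]⟩,
        ⟨13, 28, [1, -14, -13, -1, 1, 0]⟩,
        ⟨23, 30, [1, -1, 5, 1, -31, -30, -29, -1, 5, 1, 1, 0]⟩, ⟨8, 30, [1, -30, 29, -1, 1, 0]⟩,
        ⟨21, 30, [1, -3, 5, 1, -31, -30, 7, -2, 5, 1, 1, 0]⟩,
        ⟨13, 30, [1, -1, 5, 1, 7, -6, 5, 1, 1, 0]⟩, ⟨14, 35, [1, -7, 5, 1, 7, 5, -1, 0]⟩,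
        ⟨21, 35, [1, -2, -35, 1, 1, 0]⟩, ⟨29, 35, [1, -2, -35, -1, 1, 0]⟩,
        ⟨26, 35, [1, -1, -35, -2, 1, 0]⟩, ⟨24, 35, [1, -1, -35, 2, 1, 0]⟩,
        ⟨1, 42, [1, -3, -7, 2, -5, -3, -7, 1, 1, 0]⟩,
        ⟨37, 42, [1, -1, -7, -6, -5, -1, -7, 1, 1, 0]⟩,
        ⟨2, 60, [1, -2, 5, -12, -11, -1, 5, -1, 1, 0]⟩,
        ⟨26, 60, [1, -2, 5, -1, -11, -12, 5, 1, 1, 0]⟩,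
        ⟨33, 60, [1, -1, 5, 1, -13, -12, -11, -1, 5, 1, 1, 0]⟩,
        ⟨31, 70, [1, -1, 5, 2, 7, -1, -1, 0]⟩, ⟨9, 70, [1, -1, 5, -2, 7, -5, -1, 0]⟩,
        ⟨19, 70, [1, -1, 5, -2, 7, -1, -1, 0]⟩, ⟨69, 70, [1, -1, 5, -2, 7, 5, -1, 0]⟩,
        ⟨65, 84, [1, -1, -7, 1, 85, -84, 83, -1, -7, 1, 1, 0]⟩,
        ⟨71, 210, [1, -70, 23, -1, 1, 0]⟩]),
      (7, [
        ⟨2, 4, [1, -4, -5, 1, 1, 0]⟩, ⟨1, 5, [1, -10, -35, 25, 25, 0]⟩,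
        ⟨0, 6, [1, -6, 7, 1, 1, 0]⟩, ⟨2, 6, [1, -6, -5, -1, 1, 0]⟩, ⟨0, 7, [1, -7, 7, 0]⟩,
        ⟨9, 10, [1, -10, -11, 1, 1, 0]⟩, ⟨0, 10, [1, -5, 7, 2, 1, 0]⟩,
        ⟨11, 12, [1, -12, -11, -1, 1, 0]⟩, ⟨7, 12, [1, -12, 13, 1, 1, 0]⟩,
        ⟨5, 14, [1, -14, 13, -1, 1, 0]⟩, ⟨0, 15, [1, -15, 7, -1, 1, 0]⟩,
        ⟨13, 30, [1, -1, -5, -1, -29, -30, 31, 1, -5, 1, 1, 0]⟩,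
        ⟨17, 30, [1, -3, -5, -1, 31, 30, 7, 2, -5, 1, 1, 0]⟩,
        ⟨3, 30, [1, -1, -5, -6, 7, 1, -5, 1, 1, 0]⟩, ⟨25, 30, [1, -15, 13, -2, 1, 0]⟩,
        ⟨17, 35, [1, -2, -35, 1, 1, 0]⟩, ⟨22, 35, [1, -1, -35, -2, 1, 0]⟩,
        ⟨9, 42, [1, -1, 7, -1, -5, -6, 7, 1, 1, 0]⟩,
        ⟨52, 60, [1, -2, -5, 1, -11, 12, -5, 1, 1, 0]⟩, ⟨28, 60, [1, -30, -29, -1, 1, 0]⟩,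
        ⟨4, 60, [1, -2, -5, 12, -11, 1, -5, -1, 1, 0]⟩,
        ⟨53, 60, [1, -1, -5, -1, -11, -12, 13, 1, -5, 1, 1, 0]⟩,
        ⟨5, 60, [1, -3, -5, 1, -11, 12, 13, -1, -5, 3, 1, 0]⟩,
        ⟨27, 70, [1, -70, -23, -1, 1, 0]⟩, ⟨67, 70, [1, -1, 7, -2, -5, -1, 1, 0]⟩,
        ⟨37, 84, [1, -1, 7, -1, -83, -84, 85, 1, 7, 1, 1, 0]⟩])] },
  by decide +kernel⟩

theorem exists_certificate_19 : ∃ C : Certificate, C.isValid 19 := ⟨{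
    exceptions := [
      (5, [1, -1, 4, -1, 54, -11, -31, 4, 9, -1, -2, 1, 9, -4, -31, 11, 54, 1, 4, 1, 1, 0]),
      (7, [1, -1, -8, 1, 11, -4, 1, 0]),
      (11, [1, -1, -8, 5, 7, -1, 1, 0])]
    families := [
      (1, [⟨0, 1, [1, -1, 1, 0]⟩]),
      (2, [⟨0, 1, [1, -1, 2, 1, 1, 0]⟩]),
      (3, [⟨1, 2, [2, -2, 6, 1, 2, -1, 6, 2, 2, 0]⟩, ⟨0, 2, [1, -2, 3, 1, 1, 0]⟩]),
      (4, [
        ⟨0, 2, [1, -2, 4, 0]⟩, ⟨0, 3, [1, -3, 4, 1, 1, 0]⟩, ⟨2, 3, [3, -3, -4, 1, 3, 0]⟩,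
        ⟨1, 6, [1, -6, 5, -1, 1, 0]⟩]),
      (5, [
        ⟨2, 3, [1, -3, 4, 1, 1, 0]⟩, ⟨1, 3, [1, -1, 4, 3, -18, -3, 4, 1, 1, 0]⟩,
        ⟨1, 4, [1, -1, 20, 4, 4, 0]⟩, ⟨3, 4, [4, -2, -3, 1, 4, -1, -3, 2, 4, 0]⟩,
        ⟨0, 6, [1, -6, 5, -1, 1, 0]⟩]),
      (6, [
        ⟨1, 2, [1, -2, -3, 1, 1, 0]⟩,
        ⟨0, 6, [1, -6, -18, 12, 20, -8, -32, 8, 20, -12, -18, 6, 1, 0]⟩,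
        ⟨4, 6, [1, -2, 6, -2, -2, 0]⟩, ⟨2, 6, [1, -2, 6, 2, -2, 0]⟩]),
      (7, [
        ⟨1, 2, [2, -2, 3, 1, 2, 0]⟩, ⟨2, 6, [1, -3, -12, 1, 1, 0]⟩, ⟨0, 6, [1, -6, 7, 1, 1, 0]⟩,
        ⟨4, 12, [1, -12, 11, -1, 1, 0]⟩, ⟨10, 18, [1, -1, -18, 1, 1, 0]⟩,
        ⟨16, 18, [1, -9, 11, 2, 1, 0]⟩, ⟨22, 36, [1, -1, -37, 36, 7, 1, 1, 0]⟩]),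
      (8, [
        ⟨1, 3, [3, -3, -2, -1, 3, 0]⟩, ⟨2, 4, [1, -2, 8, 2, 1, 0]⟩,
        ⟨3, 6, [1, -6, -7, 1, 1, 0]⟩, ⟨0, 8, [1, -24, -56, 32, 20, -8, 1, 0]⟩,
        ⟨4, 8, [1, -4, 8, 0]⟩, ⟨11, 12, [1, -12, -11, -1, 1, 0]⟩,
        ⟨11, 18, [1, -1, -18, -1, 1, 0]⟩, ⟨17, 18, [1, -9, -11, 2, 1, 0]⟩,
        ⟨5, 36, [1, -1, -7, -36, -37, 1, 1, 0]⟩]),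
      (9, [⟨0, 1, [1, -1, -2, 1, 1, 0]⟩])] },
  by decide +kernel⟩

theorem exists_certificate_20 : ∃ C : Certificate, C.isValid 20 := ⟨{
    exceptions := [
      (7, [1, -3, -17, 2, 9, -1, -11, 4, 3, 1, 1, 0]),
      (11, [1, -1, -9, -2, 21, -1, 1, 0]),
      (29, [1, -1, -11, 4, 1, 0])]
    families := [
      (1, [⟨0, 1, [1, -1, 1, 0]⟩]),
      (3, [
        ⟨0, 2, [1, -2, 3, 1, 1, 0]⟩, ⟨0, 3, [1, -3, 3, 0]⟩, ⟨0, 5, [1, -5, 3, 1, 1, 0]⟩,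
        ⟨5, 6, [1, -6, 7, 1, 1, 0]⟩, ⟨3, 7, [1, -1, 21, -7, 7, 0]⟩,
        ⟨0, 7, [1, -7, 3, -1, 1, 0]⟩, ⟨7, 10, [1, -5, 7, 2, 1, 0]⟩,
        ⟨3, 20, [1, -1, -19, -20, 3, 1, 1, 0]⟩, ⟨4, 21, [1, -1, 21, 1, 1, 0]⟩,
        ⟨11, 40, [1, -2, 7, 40, -39, 1, 1, 0]⟩,
        ⟨19, 40, [1, -20, -17, -3, 43, 40, 21, -2, 3, 1, 1, 0]⟩,
        ⟨1, 42, [1, -1, 3, 2, 21, 1, 1, 0]⟩, ⟨31, 48, [1, -16, -17, 1, 1, 0]⟩,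
        ⟨7, 48, [1, -48, 47, -1, 1, 0]⟩, ⟨61, 84, [1, -2, 7, 1, -11, 12, -13, -1, 7, 2, 1, 0]⟩,
        ⟨37, 84, [1, -1, 3, 4, -11, -7, 3, 1, 1, 0]⟩,
        ⟨13, 84, [1, -1, 3, 1, 83, 84, -11, -4, 3, 1, 1, 0]⟩]),
      (7, [
        ⟨1, 2, [1, -2, 3, 1, 1, 0]⟩, ⟨3, 5, [1, -5, 3, 1, 1, 0]⟩, ⟨0, 6, [1, -6, 7, 1, 1, 0]⟩,
        ⟨4, 6, [1, -3, 21, 18, 27, 0]⟩, ⟨2, 7, [1, -7, 3, -1, 1, 0]⟩, ⟨0, 7, [1, -7, 7, 0]⟩,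
        ⟨0, 8, [1, -8, 7, -1, 1, 0]⟩, ⟨0, 10, [1, -5, 7, 2, 1, 0]⟩,
        ⟨8, 21, [1, -1, 21, 1, 1, 0]⟩, ⟨26, 30, [1, -1, 3, 1, -11, -10, 3, 1, 1, 0]⟩,
        ⟨12, 35, [1, -35, -17, -1, 1, 0]⟩,
        ⟨22, 40, [1, -20, -17, -3, 43, 40, 21, -2, 3, 1, 1, 0]⟩,
        ⟨14, 40, [1, -2, 7, 40, -39, 1, 1, 0]⟩,
        ⟨4, 40, [1, -20, 23, 3, -37, 40, -19, 2, 3, -1, 1, 0]⟩, ⟨38, 42, [1, -21, 23, 2, 1, 0]⟩,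
        ⟨34, 56, [1, -1, 7, -8, 9, 1, 7, 1, 1, 0]⟩, ⟨18, 56, [1, -1, 3, 56, -19, -1, 1, 0]⟩,
        ⟨32, 84, [1, -2, 7, 1, -13, -12, -11, -1, 7, 2, 1, 0]⟩,
        ⟨20, 84, [1, -1, 3, 4, -11, -7, 3, 1, 1, 0]⟩,
        ⟨26, 84, [1, -1, 3, -4, -19, -42, 43, 1, 1, 0]⟩]),
      (9, [
        ⟨2, 7, [1, -7, 21, -49, 49, 0]⟩, ⟨6, 9, [1, -3, 9, 0]⟩, ⟨3, 9, [1, -3, 9, 0]⟩,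
        ⟨0, 9, [1, -45, -99, 54, 21, -9, 1, 0]⟩, ⟨5, 9, [1, -1, 9, -1, 1, 0]⟩,
        ⟨4, 9, [1, -1, 9, 1, 1, 0]⟩, ⟨11, 12, [1, -12, -11, -1, 1, 0]⟩,
        ⟨5, 12, [1, -12, -11, -1, 1, 0]⟩, ⟨2, 18, [1, -2, 9, 1, 1, 0]⟩,
        ⟨10, 18, [1, -1, 9, -2, 1, 0]⟩, ⟨16, 18, [1, -2, 9, -1, 1, 0]⟩,
        ⟨8, 18, [1, -1, 9, 2, 1, 0]⟩, ⟨10, 21, [1, -1, 21, 1, 1, 0]⟩,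
        ⟨1, 28, [1, -28, 29, 1, 1, 0]⟩, ⟨15, 28, [1, -28, 29, 1, 1, 0]⟩,
        ⟨7, 42, [1, -7, 9, 2, 21, 1, 1, 0]⟩, ⟨19, 42, [1, -2, -11, 42, 41, 1, 1, 0]⟩,
        ⟨34, 63, [1, -1, -31, -63, 61, -2, -19, -21, -11, 1, 1, 0]⟩,
        ⟨46, 63, [1, -1, -31, -63, 61, -2, -19, -21, -11, 1, 1, 0]⟩,
        ⟨55, 126, [1, -1, 9, -2, -19, -21, -11, 1, 1, 0]⟩,
        ⟨25, 126, [1, -1, -11, 21, -19, 2, 9, 1, 1, 0]⟩])] },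
  by decide +kernel⟩

theorem exists_certificate_21 : ∃ C : Certificate, C.isValid 21 := ⟨{
    exceptions := [
      (29, [1, -1, -13, -3, 1, 0])]
    families := [
      (1, [⟨0, 1, [1, -1, 1, 0]⟩]),
      (2, [⟨0, 1, [1, -1, 2, 1, 1, 0]⟩]),
      (4, [
        ⟨0, 2, [1, -2, 4, 0]⟩, ⟨3, 4, [1, -4, -5, 1, 1, 0]⟩, ⟨1, 5, [1, -5, -20, -25, 25, 0]⟩,
        ⟨0, 5, [1, -5, 4, -1, 1, 0]⟩, ⟨13, 20, [1, -1, 4, -1, -5, -2, 1, 0]⟩,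
        ⟨17, 20, [1, -1, -20, -1, 1, 0]⟩, ⟨9, 20, [1, -1, 4, -1, -5, 2, 1, 0]⟩]),
      (5, [
        ⟨3, 4, [1, -4, -20, 16, -16, 0]⟩, ⟨0, 4, [1, -4, 5, 1, 1, 0]⟩, ⟨0, 5, [1, -5, 5, 0]⟩,
        ⟨1, 5, [1, -5, -4, -1, 1, 0]⟩, ⟨1, 8, [1, -2, -16, -4, 4, 0]⟩,
        ⟨5, 8, [1, -2, -16, 4, 4, 0]⟩, ⟨14, 20, [1, -1, -20, 1, 1, 0]⟩,
        ⟨2, 20, [1, -2, 5, 1, 4, -1, -1, 0]⟩, ⟨18, 20, [1, -2, 5, -1, 4, 1, -1, 0]⟩]),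
      (8, [
        ⟨2, 4, [1, -2, 8, 2, 1, 0]⟩, ⟨0, 4, [1, -1, -20, 4, 8, -4, -20, 1, 1, 0]⟩,
        ⟨2, 5, [5, -5, -2, -1, 5, 0]⟩, ⟨5, 8, [1, -1, 8, -1, 1, 0]⟩,
        ⟨3, 8, [1, -1, 8, 1, 1, 0]⟩, ⟨7, 12, [1, -12, -13, 1, 1, 0]⟩,
        ⟨13, 20, [1, -1, -20, -1, 1, 0]⟩, ⟨9, 24, [1, -3, 8, 1, 1, 0]⟩,
        ⟨15, 24, [1, -3, 8, -1, 1, 0]⟩, ⟨11, 30, [1, -30, 29, -1, 1, 0]⟩,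
        ⟨1, 30, [1, -30, 29, -1, 1, 0]⟩, ⟨9, 40, [1, -1, 8, -5, 1, 0]⟩,
        ⟨25, 40, [1, -5, 8, -1, 1, 0]⟩, ⟨39, 40, [1, -1, 8, 5, 1, 0]⟩,
        ⟨15, 40, [1, -5, 8, 1, 1, 0]⟩, ⟨23, 60, [1, -12, -13, 1, 1, 0]⟩]),
      (10, [⟨0, 1, [1, -1, -2, 1, 1, 0]⟩])] },
  by decide +kernel⟩

theorem exists_certificate_22 : ∃ C : Certificate, C.isValid 22 := ⟨{
    exceptions := [
      (7, [
        1, -1, 41, -6, -13, 1, 9, -2, 19, 5, 23, -11, -81, 4, 7, -3, -17, -4, -31, 3, -19, 2, -1,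
        0])]
    families := [
      (1, [⟨0, 1, [1, -1, 1, 0]⟩]),
      (3, [
        ⟨0, 2, [1, -2, 3, 1, 1, 0]⟩, ⟨0, 3, [1, -3, 3, 0]⟩, ⟨5, 6, [1, -6, -7, 1, 1, 0]⟩,
        ⟨4, 7, [1, -1, -21, -7, -7, 0]⟩, ⟨0, 7, [1, -7, 3, -1, 1, 0]⟩,
        ⟨19, 21, [1, -1, -21, -1, 1, 0]⟩, ⟨31, 42, [1, -1, -7, -6, 5, -1, -7, 1, 1, 0]⟩,
        ⟨1, 42, [1, -2, -7, 3, 5, -2, -7, -1, 1, 0]⟩,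
        ⟨13, 42, [1, -2, -7, -1, 5, -6, -7, 2, 1, 0]⟩, ⟨37, 42, [1, -1, 3, 2, -21, -1, 1, 0]⟩]),
      (5, [
        ⟨0, 4, [1, -4, 5, 1, 1, 0]⟩, ⟨0, 5, [1, -5, 5, 0]⟩, ⟨1, 6, [3, -6, 5, -1, 3, 0]⟩,
        ⟨0, 6, [1, -6, 5, -1, 1, 0]⟩, ⟨4, 6, [1, -3, -21, 18, 27, 0]⟩,
        ⟨6, 8, [1, -8, 9, 1, 1, 0]⟩, ⟨9, 12, [1, -12, -13, 1, 1, 0]⟩,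
        ⟨11, 20, [1, -1, 5, -2, 3, 1, 5, -4, 3, 2, 5, 1, 1, 0]⟩,
        ⟨3, 20, [1, -1, 5, -1, 3, -4, 5, 1, 1, 0]⟩,
        ⟨19, 20, [1, -1, 5, 2, 3, -4, 5, 1, 3, -2, 5, 1, 1, 0]⟩,
        ⟨7, 20, [1, -1, 5, -4, 3, -1, 5, 1, 1, 0]⟩, ⟨5, 24, [1, -1, 23, -24, 5, 1, 1, 0]⟩,
        ⟨23, 30, [1, -30, 31, 1, 1, 0]⟩, ⟨17, 36, [1, -18, -17, -1, 1, 0]⟩,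
        ⟨26, 36, [1, -1, 9, -1, 37, 36, -35, 1, 9, 1, 1, 0]⟩,
        ⟨17, 40, [1, -1, -39, -40, -21, 2, 5, -2, 3, 1, 5, -1, 1, 0]⟩,
        ⟨9, 40, [1, -40, -13, -1, 1, 0]⟩, ⟨11, 45, [1, -1, 45, 2, 1, 0]⟩,
        ⟨50, 72, [1, -2, 5, 3, 23, 72, 71, 1, 1, 0]⟩,
        ⟨2, 72, [1, -4, 9, -1, -7, -8, 9, 4, 1, 0]⟩, ⟨41, 90, [1, -1, -13, 90, 89, 1, 1, 0]⟩]),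
      (7, [
        ⟨1, 2, [1, -2, -3, 1, 1, 0]⟩, ⟨0, 6, [1, -6, 7, 1, 1, 0]⟩,
        ⟨2, 6, [1, -1, -21, 6, -3, 0]⟩, ⟨2, 7, [1, -7, -3, -1, 1, 0]⟩, ⟨0, 7, [1, -7, 7, 0]⟩,
        ⟨13, 21, [1, -1, -21, 1, 1, 0]⟩, ⟨4, 42, [1, -1, -21, -2, -3, 1, 1, 0]⟩,
        ⟨22, 42, [1, -1, 7, -1, 5, -6, 7, 1, 1, 0]⟩,
        ⟨10, 42, [1, -2, 7, -6, 5, -1, 7, 2, 1, 0]⟩,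
        ⟨40, 42, [1, -2, 7, -3, 5, 2, 7, -1, 1, 0]⟩]),
      (9, [
        ⟨2, 4, [1, -4, 5, 1, 1, 0]⟩, ⟨3, 5, [5, -5, 3, 1, 5, 0]⟩, ⟨2, 6, [1, -6, 5, -1, 1, 0]⟩,
        ⟨6, 9, [1, -3, 9, 0]⟩, ⟨3, 9, [1, -3, 9, 0]⟩,
        ⟨0, 9, [1, -1, -17, -18, 27, 9, 5, -1, 1, 0]⟩, ⟨7, 18, [1, -18, -17, -1, 1, 0]⟩,
        ⟨5, 20, [1, -1, 5, -4, 3, -1, 5, 1, 1, 0]⟩, ⟨11, 24, [1, -12, -13, 1, 1, 0]⟩,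
        ⟨19, 24, [1, -1, 5, 24, 23, 1, 1, 0]⟩, ⟨16, 24, [1, -8, 9, 1, 1, 0]⟩,
        ⟨11, 30, [1, -3, 5, 2, 3, -1, 5, -1, 1, 0]⟩, ⟨19, 30, [1, -15, -17, 2, 1, 0]⟩,
        ⟨1, 30, [1, -1, 5, -1, 3, 2, -7, -5, 3, 1, 5, 1, 1, 0]⟩,
        ⟨29, 30, [1, -3, 5, 1, 3, -2, 5, 1, 1, 0]⟩, ⟨17, 30, [1, -3, 5, -1, 3, 2, 5, 1, 1, 0]⟩,
        ⟨16, 36, [1, -1, 9, -1, -35, -36, 37, 1, 9, 1, 1, 0]⟩,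
        ⟨15, 40, [1, -1, -39, -40, -21, 2, 5, -2, 3, 1, 5, -1, 1, 0]⟩,
        ⟨22, 45, [1, -2, 45, 1, 1, 0]⟩, ⟨4, 72, [1, -4, 9, -1, -7, -8, 9, 4, 1, 0]⟩,
        ⟨28, 72, [1, -2, 9, -8, -7, -1, 9, 2, 1, 0]⟩, ⟨37, 90, [1, -1, 89, -90, -13, 1, 1, 0]⟩])] },
  by decide +kernel⟩

theorem exists_certificate_23 : ∃ C : Certificate, C.isValid 23 := ⟨{
    exceptions := [
      (6, [
        1, -3, 93, 15, -42, 477, 10719, -7857, -116397, 69255, 894483, -478953, -5649021, 2775303,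
        29937843, -13286025, -125951517, 46235367, 307704339, -30292137, -243931419, 62178597,
        -33480783, 4782969, 3188646, -4782969, -33480783, -62178597, -243931419, 30292137,
        307704339, -46235367, -125951517, 13286025, 29937843, -2775303, -5649021, 478953, 894483,
        -69255, -116397, 7857, 10719, -477, -42, -15, 93, 3, 1, 0]),
      (7, [
        1, -1, -13, -2, -15, 4, 11, -1, -5, 2, 19, 3, -17, -2, -9, 1, 2, -1, -9, 2, -17, -3, 19,
        -2, -5, 1, 11, -4, -15, 2, -13, 1, 1, 0])]
    families := [
      (1, [⟨0, 1, [1, -1, 1, 0]⟩]),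
      (2, [⟨0, 1, [1, -1, 2, 1, 1, 0]⟩]),
      (3, [⟨1, 2, [2, -2, 6, 1, 2, -1, 6, 2, 2, 0]⟩, ⟨0, 2, [1, -2, 3, 1, 1, 0]⟩]),
      (4, [
        ⟨0, 2, [1, -2, 4, 0]⟩, ⟨0, 3, [1, -3, 4, 1, 1, 0]⟩, ⟨4, 5, [1, -5, 6, 1, 1, 0]⟩,
        ⟨0, 5, [1, -5, 4, -1, 1, 0]⟩, ⟨1, 6, [3, -6, -5, -1, 3, 0]⟩,
        ⟨1, 7, [1, -7, 6, -1, 1, 0]⟩, ⟨0, 7, [1, -7, 4, 1, 1, 0]⟩, ⟨5, 7, [7, -7, -4, 1, 7, 0]⟩,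
        ⟨7, 10, [1, -5, 50, 5, 1, 0]⟩, ⟨3, 20, [1, -1, 4, -1, -19, -20, -7, 1, 4, 1, 1, 0]⟩,
        ⟨17, 21, [1, -1, -22, 21, 4, 1, 1, 0]⟩, ⟨6, 35, [1, -35, -17, -1, 1, 0]⟩,
        ⟨11, 60, [1, -1, 4, -1, -7, -15, 4, 1, 1, 0]⟩, ⟨13, 70, [1, -1, 70, 3, 1, 0]⟩,
        ⟨53, 84, [1, -4, -17, -21, -22, 1, 1, 0]⟩,
        ⟨65, 84, [1, -1, 4, -3, -7, 4, -5, -6, -7, 1, 4, -1, 1, 0]⟩]),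
      (5, [
        ⟨2, 3, [3, -3, -4, 1, 3, 0]⟩, ⟨0, 5, [1, -5, 5, 0]⟩,
        ⟨3, 5, [1, -1, 5, 1, 2, -1, 5, 1, 1, 0]⟩, ⟨2, 5, [1, -1, 5, -1, 2, 1, 5, 1, 1, 0]⟩,
        ⟨1, 6, [2, -6, 5, -1, 2, 0]⟩, ⟨3, 6, [2, -6, 10, -1, 2, -3, 10, 2, 2, 0]⟩,
        ⟨6, 10, [1, -2, 5, -1, 2, 1, 5, 2, 1, 0]⟩, ⟨4, 10, [1, -2, 5, 1, 2, -1, 5, 2, 1, 0]⟩]),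
      (6, [
        ⟨0, 2, [1, -2, 6, 1, 1, 0]⟩, ⟨0, 3, [1, -3, 6, -1, 1, 0]⟩, ⟨2, 3, [1, -3, 4, 1, 1, 0]⟩,
        ⟨0, 5, [1, -5, 6, 1, 1, 0]⟩, ⟨3, 5, [5, -5, -3, 1, 5, 0]⟩, ⟨1, 5, [1, -5, 4, -1, 1, 0]⟩,
        ⟨0, 7, [1, -7, 6, -1, 1, 0]⟩, ⟨5, 7, [1, -7, 4, 1, 1, 0]⟩,
        ⟨4, 7, [1, -3, 70, 7, 4, -1, 1, 0]⟩,
        ⟨17, 20, [1, -1, 4, -1, -7, 20, -19, 1, 4, 1, 1, 0]⟩,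
        ⟨10, 21, [1, -1, 4, -21, -22, 1, 1, 0]⟩, ⟨13, 42, [1, -21, -19, -2, 1, 0]⟩,
        ⟨49, 60, [1, -1, 4, -1, -7, -15, 4, 1, 1, 0]⟩,
        ⟨79, 84, [1, -4, -17, -21, -22, 1, 1, 0]⟩,
        ⟨43, 84, [1, -1, 4, -3, -7, 4, -5, -6, -7, 1, 4, -1, 1, 0]⟩]),
      (7, [
        ⟨1, 2, [2, -2, -3, 1, 2, 0]⟩, ⟨0, 6, [1, -6, 7, 1, 1, 0]⟩, ⟨4, 6, [3, -6, 7, 1, 3, 0]⟩,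
        ⟨0, 7, [1, -7, 7, 0]⟩, ⟨8, 12, [1, -12, -13, 1, 1, 0]⟩,
        ⟨4, 14, [1, -14, -13, -1, 1, 0]⟩, ⟨10, 14, [1, -2, 7, 2, 3, -1, 7, 1, 1, 0]⟩,
        ⟨8, 21, [1, -1, 10, -21, -22, 1, 1, 0]⟩, ⟨26, 28, [1, -2, 7, 1, 3, 4, 7, -1, 1, 0]⟩,
        ⟨6, 28, [1, -2, 7, 4, 3, -2, 7, 1, 1, 0]⟩, ⟨2, 28, [1, -2, 7, -1, 3, -4, 7, -1, 1, 0]⟩]),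
      (8, [
        ⟨1, 2, [1, -2, 3, 1, 1, 0]⟩, ⟨2, 4, [1, -2, 8, 2, 1, 0]⟩, ⟨4, 8, [1, -4, 8, 0]⟩,
        ⟨0, 8, [4, -4, -11, 40, 104, -64, -80, 16, 12, 4, 4, 0]⟩]),
      (9, [
        ⟨1, 4, [4, -4, 3, -1, 4, 0]⟩, ⟨3, 4, [4, -2, 3, 1, 4, -1, 3, 2, 4, 0]⟩,
        ⟨2, 5, [5, -5, -2, -1, 5, 0]⟩, ⟨0, 5, [1, -1, -5, 1, 2, -1, -5, 1, 1, 0]⟩,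
        ⟨4, 5, [1, -1, -5, -1, 2, 1, -5, 1, 1, 0]⟩, ⟨8, 10, [1, -2, -5, 1, 2, -1, -5, 2, 1, 0]⟩,
        ⟨6, 10, [1, -2, -5, -1, 2, 1, -5, 2, 1, 0]⟩]),
      (10, [
        ⟨1, 3, [3, -3, -2, -1, 3, 0]⟩, ⟨3, 6, [1, -6, 7, 1, 1, 0]⟩,
        ⟨2, 7, [1, -3, 70, 7, 7, 0]⟩, ⟨0, 10, [1, -20, -45, 25, 125, 0]⟩,
        ⟨8, 10, [1, -1, 10, -4, 8, 0]⟩, ⟨6, 10, [1, -2, 10, 4, 8, 0]⟩,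
        ⟨2, 10, [1, -1, 10, 4, 8, 0]⟩, ⟨4, 10, [1, -2, 10, -4, 8, 0]⟩,
        ⟨5, 14, [1, -2, 7, 2, 3, -1, 7, 1, 1, 0]⟩, ⟨13, 14, [1, -2, 7, -2, 3, 1, 7, 1, 1, 0]⟩,
        ⟨11, 21, [1, -1, -22, 21, 10, 1, 1, 0]⟩, ⟨3, 28, [1, -4, 7, -2, 3, 1, 7, 2, 1, 0]⟩,
        ⟨21, 28, [1, -2, 7, 4, 3, -2, 7, 1, 1, 0]⟩,
        ⟨17, 28, [1, -2, 7, -1, 3, -4, 7, -1, 1, 0]⟩, ⟨1, 28, [1, -2, 7, 1, 3, 4, 7, -1, 1, 0]⟩,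
        ⟨15, 28, [1, -4, 7, 2, 3, -1, 7, 2, 1, 0]⟩, ⟨7, 28, [1, -4, 7, 1, 3, -2, 7, 1, 1, 0]⟩]),
      (11, [⟨0, 1, [1, -1, -2, 1, 1, 0]⟩])] },
  by decide +kernel⟩

theorem exists_certificate_25 : ∃ C : Certificate, C.isValid 25 := ⟨{
    exceptions := [
      (7, [
        1, -3, 151, -22, -57, 5, -26, -3, 7, 4, -51, -23, 218, 57, 101, -5, -43, 8, 99, -43, -382,
        81, -649, -82, -443, -131, 174, -47, 43, 15, -74, 31, 257, -40, -201, -79, 568, 15, -149,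
        -44, 57, -23, -176, 15, -107, -2, 1, 0]),
      (11, [1, -2, -9, 7, 76, 1, 1, 0])]
    families := [
      (1, [⟨0, 1, [1, -1, 1, 0]⟩]),
      (2, [⟨0, 1, [1, -1, 2, 1, 1, 0]⟩]),
      (3, [⟨1, 2, [2, -2, 6, 1, 2, -1, 6, 2, 2, 0]⟩, ⟨0, 2, [1, -2, 3, 1, 1, 0]⟩]),
      (4, [
        ⟨0, 2, [1, -2, 4, 0]⟩, ⟨0, 3, [1, -3, 4, 1, 1, 0]⟩, ⟨4, 5, [1, -5, -6, 1, 1, 0]⟩,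
        ⟨0, 5, [1, -5, 4, -1, 1, 0]⟩, ⟨5, 6, [3, -6, 7, 1, 3, 0]⟩,
        ⟨1, 7, [1, -7, -6, -1, 1, 0]⟩, ⟨6, 7, [1, -1, -6, -7, -49, 0]⟩,
        ⟨0, 7, [1, -7, 4, 1, 1, 0]⟩, ⟨19, 24, [1, -1, -24, 1, 1, 0]⟩,
        ⟨23, 28, [1, -1, 4, 1, 29, -28, -9, -1, 4, 1, 1, 0]⟩,
        ⟨7, 36, [1, -1, 4, 1, -9, -1, -36, 1, 6, -1, -1, 0]⟩, ⟨47, 56, [1, -56, 19, 1, 1, 0]⟩,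
        ⟨37, 60, [1, -1, 4, -1, -21, 20, -9, 2, 29, 60, -59, 1, 4, 1, 1, 0]⟩,
        ⟨10, 63, [1, -63, -31, -1, 1, 0]⟩, ⟨33, 70, [1, -14, 19, 5, 1, 0]⟩,
        ⟨13, 80, [1, -1, 4, -1, 79, -80, -9, 1, 4, 1, 1, 0]⟩, ⟨73, 84, [1, -28, -31, 3, 1, 0]⟩,
        ⟨67, 84, [1, -1, -21, 1, 4, -1, 1, 0]⟩, ⟨25, 84, [1, -1, -21, 1, 4, 1, 1, 0]⟩,
        ⟨61, 90, [1, -30, 29, -1, 1, 0]⟩, ⟨31, 90, [1, -30, 29, -1, 1, 0]⟩,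
        ⟨16, 105, [1, -1, 26, -105, 4, -1, 1, 0]⟩, ⟨19, 126, [1, -1, 126, -5, 1, 0]⟩,
        ⟨31, 126, [1, -1, -6, 1, 19, -18, 11, -7, -6, 1, 1, 0]⟩,
        ⟨133, 240, [1, -1, 4, -1, 16, -1, 14, -15, 16, 1, 4, 1, 1, 0]⟩,
        ⟨233, 280, [1, -280, 269, -11, -6, 1, 1, 0]⟩]),
      (6, [
        ⟨0, 2, [1, -2, 6, 1, 1, 0]⟩, ⟨0, 3, [1, -3, 6, -1, 1, 0]⟩, ⟨2, 3, [1, -3, -4, 1, 1, 0]⟩,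
        ⟨0, 5, [1, -5, 6, 1, 1, 0]⟩, ⟨1, 5, [1, -5, -4, -1, 1, 0]⟩,
        ⟨2, 7, [1, -1, -4, 7, -49, 0]⟩, ⟨5, 7, [1, -7, -4, 1, 1, 0]⟩,
        ⟨0, 7, [1, -7, 6, -1, 1, 0]⟩, ⟨19, 24, [1, -1, -24, -1, 1, 0]⟩,
        ⟨3, 28, [1, -1, -4, -1, -9, -28, -29, 1, -4, 1, 1, 0]⟩,
        ⟨7, 30, [1, -30, -29, -1, 1, 0]⟩,
        ⟨13, 60, [1, -1, -4, 1, -59, 60, -29, 2, -9, 20, 21, -1, -4, 1, 1, 0]⟩,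
        ⟨19, 60, [1, -20, -19, -1, 1, 0]⟩, ⟨53, 70, [1, -70, 71, 1, 1, 0]⟩,
        ⟨9, 80, [1, -1, -4, 1, -9, -80, -79, -1, -4, 1, 1, 0]⟩,
        ⟨61, 96, [1, -24, -29, 5, 96, -1, -4, 1, 1, 0]⟩, ⟨13, 96, [1, -32, -29, -3, 1, 0]⟩,
        ⟨43, 140, [1, -1, -4, -1, -34, -35, -4, 1, 1, 0]⟩, ⟨55, 168, [1, -56, -19, 1, 1, 0]⟩,
        ⟨49, 240, [1, -1, -4, 1, 16, -1, -14, -15, 16, -1, -4, 1, 1, 0]⟩,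
        ⟨229, 240, [1, -10, -19, -48, -49, 1, 1, 0]⟩]),
      (7, [
        ⟨2, 3, [3, -3, 4, 1, 3, 0]⟩, ⟨3, 4, [4, -2, -3, 1, 4, -1, -3, 2, 4, 0]⟩,
        ⟨1, 4, [4, -4, -3, -1, 4, 0]⟩, ⟨4, 6, [1, -6, -7, 1, 1, 0]⟩,
        ⟨0, 6, [1, -6, 7, 1, 1, 0]⟩]),
      (8, [
        ⟨1, 2, [1, -2, -3, 1, 1, 0]⟩, ⟨2, 4, [1, -2, 8, 2, 1, 0]⟩, ⟨4, 8, [1, -4, 8, 0]⟩,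
        ⟨0, 8, [1, -1, -3, 8, 72, -64, -128, 64, 72, -8, -3, 1, 1, 0]⟩]),
      (9, [
        ⟨1, 2, [2, -2, 3, 1, 2, 0]⟩, ⟨3, 7, [7, -7, -2, -1, 7, 0]⟩, ⟨6, 9, [1, -3, 9, 0]⟩,
        ⟨3, 9, [1, -3, 9, 0]⟩, ⟨0, 9, [1, -45, 126, 81, -99, -18, 1, 0]⟩,
        ⟨6, 10, [1, -10, -11, 1, 1, 0]⟩, ⟨4, 12, [1, -12, -11, -1, 1, 0]⟩,
        ⟨5, 15, [1, -15, 14, -1, 1, 0]⟩, ⟨16, 18, [1, -9, -11, 2, 1, 0]⟩,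
        ⟨13, 21, [1, -21, -11, 1, 1, 0]⟩, ⟨8, 24, [1, -8, 9, 1, 1, 0]⟩,
        ⟨14, 28, [1, -7, 9, 2, 1, 0]⟩, ⟨20, 28, [1, -7, -11, 4, 1, 0]⟩,
        ⟨14, 30, [1, -15, -16, 1, 1, 0]⟩, ⟨22, 35, [1, -35, -36, 1, 1, 0]⟩,
        ⟨14, 36, [1, -1, 9, 1, 6, -1, 4, 1, 36, -1, -1, 0]⟩, ⟨14, 42, [1, -7, 9, 2, 1, 0]⟩,
        ⟨26, 42, [1, -1, 14, -1, -4, -21, -11, 1, 14, 1, 1, 0]⟩,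
        ⟨38, 60, [1, -60, -61, 1, 1, 0]⟩, ⟨8, 84, [1, -1, 14, 1, -4, 1, 21, -1, 14, 1, 1, 0]⟩,
        ⟨44, 84, [1, -3, 14, -1, -4, -1, -6, -7, -4, 1, 14, 3, 1, 0]⟩,
        ⟨2, 84, [1, -3, 14, -1, -4, -7, -6, -1, -4, 1, 14, 3, 1, 0]⟩,
        ⟨82, 84, [1, -1, 14, -1, -4, 1, 21, 1, 14, 1, 1, 0]⟩,
        ⟨100, 126, [1, -1, 9, -7, 6, -7, 4, 1, 6, 7, 9, 1, 1, 0]⟩,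
        ⟨58, 126, [1, -2, 9, 7, 6, 1, 9, 1, 1, 0]⟩, ⟨46, 126, [1, -1, 126, 5, 1, 0]⟩,
        ⟨74, 126, [1, -63, -61, -2, 1, 0]⟩, ⟨20, 126, [1, -5, 126, -1, 1, 0]⟩,
        ⟨22, 126, [1, -1, 9, -1, 6, -1, 31, -63, 4, 1, 6, 1, 9, 1, 1, 0]⟩,
        ⟨116, 168, [1, -3, 14, 1, -4, -3, -56, 1, -6, -1, -4, -1, 14, 3, 1, 0]⟩,
        ⟨62, 180, [1, -60, 59, -1, 1, 0]⟩,
        ⟨130, 252, [1, -1, 9, -1, 6, -1, 4, 9, -14, 1, -1, 0]⟩,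
        ⟨190, 252, [1, -7, -36, -1, 14, 1, 1, 0]⟩]),
      (11, [
        ⟨1, 3, [3, -3, -2, -1, 3, 0]⟩, ⟨4, 8, [1, -8, -9, 1, 1, 0]⟩,
        ⟨4, 10, [1, -10, -9, -1, 1, 0]⟩, ⟨0, 10, [1, -10, 11, 1, 1, 0]⟩,
        ⟨0, 12, [1, -12, 11, -1, 1, 0]⟩, ⟨3, 14, [1, -2, -14, -4, -4, 0]⟩,
        ⟨12, 14, [1, -7, -9, 2, 1, 0]⟩, ⟨11, 14, [1, -2, -14, 2, -4, 0]⟩,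
        ⟨6, 14, [1, -7, -14, -1, 1, 0]⟩, ⟨1, 14, [1, -2, -14, -2, -4, 0]⟩,
        ⟨9, 14, [1, -2, -14, 4, -4, 0]⟩, ⟨5, 14, [1, -1, -14, 4, -4, 0]⟩,
        ⟨13, 14, [1, -126, -224, 98, -49, 0]⟩, ⟨7, 14, [1, -1, -14, -4, -4, 0]⟩,
        ⟨8, 15, [1, -15, 16, 1, 1, 0]⟩, ⟨0, 18, [1, -9, 11, 2, 1, 0]⟩,
        ⟨0, 21, [1, -21, 11, 1, 1, 0]⟩, ⟨0, 28, [1, -7, 11, 4, 1, 0]⟩,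
        ⟨14, 36, [1, -1, 36, -1, -4, -1, 6, -1, -9, -1, 1, 0]⟩,
        ⟨18, 42, [1, -42, 41, -1, 1, 0]⟩,
        ⟨32, 42, [1, -1, -14, 1, 11, -21, -4, -1, -14, 1, 1, 0]⟩,
        ⟨26, 60, [1, -60, -59, -1, 1, 0]⟩, ⟨36, 70, [1, -35, 36, 1, 1, 0]⟩,
        ⟨8, 84, [1, -1, -14, -1, -4, 1, 21, 1, -14, 1, 1, 0]⟩,
        ⟨80, 84, [1, -3, -14, 1, -4, -1, 6, -7, -4, -1, -14, 3, 1, 0]⟩,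
        ⟨2, 90, [1, -2, -9, 1, 6, -5, -9, 1, 1, 0]⟩,
        ⟨12, 90, [1, -2, -9, 5, 6, -5, -4, -1, 6, -5, -9, 2, 1, 0]⟩,
        ⟨62, 90, [1, -2, -9, -5, 6, -5, -4, -1, 6, 5, -9, 2, 1, 0]⟩,
        ⟨24, 126, [1, -2, -9, -7, 6, -1, -9, 1, 1, 0]⟩, ⟨30, 126, [1, -5, 126, -1, 1, 0]⟩,
        ⟨66, 126, [1, -1, -9, 7, 6, -7, -4, 1, 6, -7, -9, 1, 1, 0]⟩,
        ⟨78, 126, [1, -1, -9, 1, 6, -1, -4, 63, 31, 1, 6, -1, -9, 1, 1, 0]⟩,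
        ⟨78, 140, [1, -140, 141, 1, 1, 0]⟩,
        ⟨128, 168, [1, -3, -14, -1, -4, -3, 56, -1, 6, -1, -4, 1, -14, 3, 1, 0]⟩,
        ⟨114, 252, [1, -1, -14, 9, -4, 1, 6, -1, -9, 1, 1, 0]⟩]),
      (12, [⟨0, 1, [1, -1, -2, 1, 1, 0]⟩])] },
  by decide +kernel⟩

theorem exists_certificate_26 : ∃ C : Certificate, C.isValid 26 := ⟨{
    exceptions := [
      (7, [
        1, -1, 27, -4, -11, 1, 15, -8, -103, 47, 501, -172, -965, -239, -541, -50, 113, -11, -67,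
        -10, 51, -19, -137, 4, -23, 5, -31, 4, -9, 1, -11, -4, 27, -1, 1, 0]),
      (9, [1, -1, -17, 8, 55, 17, 53, -6, 1, 0]),
      (11, [1, -3, -7, 1, -3, -1, -5, -1, -43, -4, 15, 1, -1, 0]),
      (19, [1, -1, -7, 2, -59, -3, 1, 0])]
    families := [
      (1, [⟨0, 1, [1, -1, 1, 0]⟩]),
      (3, [
        ⟨0, 2, [1, -2, 3, 1, 1, 0]⟩, ⟨0, 3, [1, -3, 3, 0]⟩, ⟨0, 5, [1, -5, 3, 1, 1, 0]⟩,
        ⟨5, 7, [1, -1, 27, -28, -77, 49, -49, 0]⟩, ⟨0, 7, [1, -7, 3, -1, 1, 0]⟩,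
        ⟨4, 9, [1, -1, 3, 1, 9, -1, 1, 0]⟩, ⟨2, 9, [1, -1, 3, -1, 9, -1, 1, 0]⟩,
        ⟨7, 10, [5, -5, -7, 2, 5, 0]⟩, ⟨1, 10, [1, -10, 9, -1, 1, 0]⟩,
        ⟨3, 14, [1, -7, 9, 2, 1, 0]⟩, ⟨5, 18, [1, -1, 3, -1, 9, 2, 1, 0]⟩,
        ⟨1, 18, [1, -1, 3, 1, 9, 2, 1, 0]⟩, ⟨4, 35, [1, -35, -17, -1, 1, 0]⟩,
        ⟨7, 36, [1, -1, 3, 1, 9, -4, 1, 0]⟩, ⟨35, 36, [1, -1, 3, -1, 9, -4, 1, 0]⟩,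
        ⟨37, 42, [1, -42, -43, 1, 1, 0]⟩,
        ⟨43, 45, [1, -1, 3, 1, -23, -45, -43, -2, 9, -1, 1, 0]⟩,
        ⟨53, 60, [1, -60, 61, 1, 1, 0]⟩, ⟨69, 140, [1, -70, -23, -1, 1, 0]⟩,
        ⟨29, 140, [1, -28, 29, 1, 1, 0]⟩, ⟨89, 180, [1, -90, -23, 2, 1, 0]⟩]),
      (5, [
        ⟨0, 5, [1, -5, 5, 0]⟩, ⟨1, 5, [1, -1, 5, -1, -1, 0]⟩, ⟨4, 5, [1, -1, 5, 1, -1, 0]⟩,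
        ⟨7, 10, [1, -1, 5, -2, -1, 0]⟩, ⟨8, 10, [1, -2, 5, -1, -1, 0]⟩,
        ⟨3, 10, [1, -1, 5, 2, -1, 0]⟩, ⟨2, 10, [1, -2, 5, 1, -1, 0]⟩]),
      (7, [
        ⟨3, 5, [5, -5, -3, 1, 5, 0]⟩, ⟨0, 7, [1, -7, 7, 0]⟩, ⟨7, 9, [9, -9, 5, 1, 9, 0]⟩,
        ⟨7, 10, [1, -10, -11, 1, 1, 0]⟩, ⟨1, 11, [1, -8, 209, 11, -11, 0]⟩,
        ⟨3, 12, [1, -12, -11, -1, 1, 0]⟩, ⟨10, 14, [1, -14, 15, 1, 1, 0]⟩,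
        ⟨4, 14, [1, -2, 7, 2, -3, -1, 7, 1, 1, 0]⟩, ⟨17, 18, [1, -18, -19, 1, 1, 0]⟩,
        ⟨1, 18, [1, -3, -45, -18, 27, -3, 15, -18, 27, 0]⟩, ⟨3, 18, [1, -9, -11, 2, 1, 0]⟩,
        ⟨13, 18, [3, -18, 19, 1, 3, 0]⟩, ⟨19, 20, [1, -20, -19, -1, 1, 0]⟩,
        ⟨15, 21, [1, -21, -11, 1, 1, 0]⟩, ⟨26, 28, [1, -2, 7, -1, -3, -4, 7, -1, 1, 0]⟩,
        ⟨2, 28, [1, -2, 7, 1, -3, 4, 7, -1, 1, 0]⟩, ⟨6, 28, [1, -2, 7, -4, -3, 2, 7, 1, 1, 0]⟩,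
        ⟨22, 28, [1, -2, 7, 4, -3, -2, 7, 1, 1, 0]⟩, ⟨15, 28, [1, -7, -11, 4, 1, 0]⟩,
        ⟨16, 28, [1, -4, 7, 2, -3, -1, 7, 2, 1, 0]⟩,
        ⟨20, 28, [1, -4, 7, -1, -3, 2, 7, 1, 1, 0]⟩, ⟨8, 28, [1, -4, 7, 1, -3, -2, 7, 1, 1, 0]⟩,
        ⟨12, 28, [1, -4, 7, -2, -3, 1, 7, 2, 1, 0]⟩, ⟨29, 40, [1, -40, 41, 1, 1, 0]⟩,
        ⟨41, 42, [1, -21, -19, -2, 1, 0]⟩, ⟨11, 42, [1, -42, 41, -1, 1, 0]⟩,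
        ⟨24, 45, [1, -1, -45, -1, -3, -1, 5, -1, 9, -1, -15, -1, -1, 0]⟩,
        ⟨0, 55, [1, -55, 7, 1, 1, 0]⟩, ⟨53, 66, [1, -2, 33, 2, -3, -1, 33, 1, 1, 0]⟩,
        ⟨65, 66, [1, -22, -19, -3, 1, 0]⟩,
        ⟨29, 66, [1, -1, 33, -2, -3, -22, 5, -2, -3, 2, 33, 1, 1, 0]⟩,
        ⟨59, 77, [1, -3, -77, -3, 1, 0]⟩, ⟨9, 84, [1, -3, 7, 4, -25, -21, -19, -2, 1, 0]⟩,
        ⟨17, 84, [1, -1, 7, -1, -3, 1, 5, -4, -3, 1, 7, 1, 1, 0]⟩,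
        ⟨81, 84, [1, -1, 7, 1, -3, 1, 5, -4, -3, -1, 7, 1, 1, 0]⟩,
        ⟨45, 84, [1, -1, 7, -1, -3, -4, 5, 1, -3, 1, 7, 1, 1, 0]⟩,
        ⟨69, 84, [1, -3, 7, 1, -3, 1, 5, -4, -3, -1, 7, 3, 1, 0]⟩,
        ⟨92, 99, [1, -4, -103, 99, 7, 1, 1, 0]⟩,
        ⟨65, 105, [1, -5, 7, -1, -3, -5, -21, -1, 5, 7, -3, -1, 7, -5, 1, 0]⟩,
        ⟨101, 105, [1, -7, 15, 1, -9, -35, -37, 2, 15, 1, 1, 0]⟩,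
        ⟨26, 105, [1, -2, 105, -4, 1, 0]⟩, ⟨44, 105, [1, -4, 105, 1, 1, 0]⟩,
        ⟨29, 105, [1, -1, 105, 4, 1, 0]⟩, ⟨35, 110, [1, -2, 53, -55, -19, 2, 1, 0]⟩,
        ⟨113, 132, [1, -4, 33, 1, 7, 22, 23, -1, 33, 4, 1, 0]⟩,
        ⟨5, 140, [1, -5, 7, 1, -19, 20, -3, -1, 7, 5, 1, 0]⟩,
        ⟨3, 154, [1, -1, 7, -22, 23, 1, 7, 1, 1, 0]⟩,
        ⟨143, 168, [1, -3, 59, 56, -25, 6, 7, -1, 1, 0]⟩,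
        ⟨89, 168, [1, -3, 59, 56, 27, 2, 7, 1, 23, 24, 7, -1, 1, 0]⟩,
        ⟨171, 176, [1, -2, -11, 1, 17, -16, -11, -1, 1, 0]⟩, ⟨71, 210, [1, -35, 33, -2, 1, 0]⟩,
        ⟨191, 210, [1, -4, -103, -210, -11, -1, 1, 0]⟩,
        ⟨117, 252, [1, -9, 7, -1, -3, -4, 5, 1, -3, 1, 7, 9, 1, 0]⟩,
        ⟨75, 280, [1, -280, 93, -1, 1, 0]⟩,
        ⟨215, 280, [1, -5, 7, 1, -19, -56, -55, -1, 7, 5, 1, 0]⟩,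
        ⟨50, 315, [1, -1, -45, -2, 7, 1, 1, 0]⟩,
        ⟨5, 330, [1, -2, -11, 15, 17, -2, -11, 1, 1, 0]⟩,
        ⟨305, 330, [1, -2, -11, -15, 17, 2, -11, 1, 1, 0]⟩,
        ⟨227, 336, [1, -1, 7, -1, -3, -2, 5, 48, 49, -1, -3, 1, 7, 1, 1, 0]⟩,
        ⟨281, 462, [1, -2, 33, -7, -3, 11, 7, -2, -77, 1, 1, 0]⟩,
        ⟨411, 630, [1, -3, 7, 30, -29, 1, 7, -90, -29, -3, 7, 1, 1, 0]⟩]),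
      (9, [
        ⟨1, 2, [1, -2, 3, 1, 1, 0]⟩, ⟨0, 3, [1, -3, 9, 0]⟩, ⟨3, 5, [1, -5, 3, 1, 1, 0]⟩,
        ⟨1, 5, [1, -1, 3, 5, -25, 0]⟩, ⟨2, 7, [1, -7, 3, -1, 1, 0]⟩,
        ⟨1, 9, [1, -1, 9, 1, 3, -1, 1, 0]⟩, ⟨8, 9, [1, -1, 9, -1, 3, -1, 1, 0]⟩,
        ⟨0, 10, [1, -10, 9, -1, 1, 0]⟩, ⟨0, 14, [1, -7, 9, 2, 1, 0]⟩,
        ⟨8, 14, [7, -14, -5, 1, 7, 0]⟩, ⟨4, 18, [1, -2, 9, -1, 3, 1, 1, 0]⟩,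
        ⟨14, 18, [1, -2, 9, 1, 3, 1, 1, 0]⟩, ⟨18, 28, [1, -28, 29, 1, 1, 0]⟩,
        ⟨20, 36, [1, -4, 9, -1, 3, -1, 1, 0]⟩, ⟨16, 36, [1, -4, 9, 1, 3, -1, 1, 0]⟩,
        ⟨38, 42, [1, -21, -23, 2, 1, 0]⟩, ⟨29, 45, [1, -45, -23, 1, 1, 0]⟩,
        ⟨7, 45, [1, -1, 9, -2, -43, -45, -23, 1, 3, -1, 1, 0]⟩,
        ⟨34, 70, [1, -35, -17, -1, 1, 0]⟩, ⟨24, 70, [1, -70, -23, -1, 1, 0]⟩,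
        ⟨62, 84, [1, -1, 3, -1, 9, -28, 29, 1, 3, 1, 1, 0]⟩,
        ⟨47, 105, [1, -1, 3, -1, -17, -35, 3, 1, 1, 0]⟩, ⟨124, 210, [1, -42, -43, 1, 1, 0]⟩]),
      (11, [
        ⟨2, 6, [3, -6, 5, -1, 3, 0]⟩, ⟨2, 7, [7, -7, 3, -1, 7, 0]⟩,
        ⟨0, 10, [1, -10, 11, 1, 1, 0]⟩, ⟨4, 10, [1, -5, -275, 50, -25, 0]⟩,
        ⟨0, 11, [1, -11, 11, 0]⟩, ⟨0, 12, [1, -12, 11, -1, 1, 0]⟩,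
        ⟨13, 14, [1, -2, -7, 2, -3, -1, -7, 1, 1, 0]⟩,
        ⟨5, 14, [1, -2, -7, -2, -3, 1, -7, 1, 1, 0]⟩, ⟨10, 18, [1, -18, 19, 1, 1, 0]⟩,
        ⟨0, 18, [1, -9, 11, 2, 1, 0]⟩, ⟨8, 20, [1, -20, 19, -1, 1, 0]⟩,
        ⟨0, 21, [1, -21, 11, 1, 1, 0]⟩, ⟨15, 28, [1, -4, -7, -2, -3, 1, -7, 2, 1, 0]⟩,
        ⟨21, 28, [1, -2, -7, -4, -3, 2, -7, 1, 1, 0]⟩,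
        ⟨1, 28, [1, -2, -7, -1, -3, -4, -7, -1, 1, 0]⟩,
        ⟨17, 28, [1, -2, -7, 1, -3, 4, -7, -1, 1, 0]⟩, ⟨0, 28, [1, -7, 11, 4, 1, 0]⟩,
        ⟨7, 28, [1, -4, -7, -1, -3, 2, -7, 1, 1, 0]⟩,
        ⟨25, 28, [1, -2, -7, 4, -3, -2, -7, 1, 1, 0]⟩,
        ⟨11, 28, [1, -4, -7, 1, -3, -2, -7, 1, 1, 0]⟩,
        ⟨3, 28, [1, -4, -7, 2, -3, -1, -7, 2, 1, 0]⟩, ⟨4, 42, [1, -21, 19, -2, 1, 0]⟩,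
        ⟨3, 45, [1, -1, -15, 1, -9, -1, 5, 1, 3, -1, -45, 1, -1, 0]⟩,
        ⟨31, 55, [1, -55, -7, 1, 1, 0]⟩, ⟨58, 66, [1, -2, -33, -2, -3, 1, -33, 1, 1, 0]⟩,
        ⟨10, 66, [1, -22, 19, -3, 1, 0]⟩,
        ⟨4, 66, [1, -1, -33, 2, -3, -22, -5, -2, -3, -2, -33, 1, 1, 0]⟩,
        ⟨42, 70, [1, -35, -33, -2, 1, 0]⟩, ⟨45, 77, [1, -1, -77, -3, 1, 0]⟩,
        ⟨82, 84, [1, -1, -7, -1, -3, -4, -5, 1, -3, 1, -7, 1, 1, 0]⟩,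
        ⟨6, 84, [1, -1, -7, 1, -3, -4, -5, 1, -3, -1, -7, 1, 1, 0]⟩,
        ⟨54, 84, [1, -1, -7, -1, -3, 1, -5, -4, -3, 1, -7, 1, 1, 0]⟩,
        ⟨18, 84, [1, -3, -7, -1, -3, 1, -5, -4, -3, 1, -7, 3, 1, 0]⟩,
        ⟨78, 84, [1, -3, -7, 4, -25, -21, 19, -2, 1, 0]⟩,
        ⟨34, 84, [1, -1, -7, 1, -3, 1, -5, -4, -3, -1, -7, 1, 1, 0]⟩,
        ⟨40, 84, [1, -42, -41, -1, 1, 0]⟩, ⟨85, 99, [1, -4, -103, 99, -7, 1, 1, 0]⟩,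
        ⟨52, 105, [1, -4, 105, 2, 1, 0]⟩,
        ⟨1, 105, [1, -5, -7, 1, -3, -5, 21, 1, -5, 7, -3, 1, -7, -5, 1, 0]⟩,
        ⟨43, 105, [1, -1, 105, -4, 1, 0]⟩, ⟨28, 105, [1, -4, 105, -1, 1, 0]⟩,
        ⟨97, 105, [1, -7, -15, -1, -9, 35, 37, -2, -15, 1, 1, 0]⟩,
        ⟨46, 110, [1, -2, 19, 55, 53, 2, 1, 0]⟩,
        ⟨34, 132, [1, -4, -33, -1, 23, 22, -7, 1, -33, 4, 1, 0]⟩,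
        ⟨66, 140, [1, -5, -7, -1, -3, 20, 19, 1, -7, 5, 1, 0]⟩,
        ⟨34, 154, [1, -1, -7, 1, 23, -22, -7, 1, 1, 0]⟩,
        ⟨10, 168, [1, -3, -59, 56, 27, 2, -7, -1, 23, -24, -7, -1, 1, 0]⟩,
        ⟨160, 168, [1, -3, -59, 56, -25, 6, -7, -1, 1, 0]⟩,
        ⟨84, 176, [1, -2, 11, -1, 17, 16, 11, -1, 1, 0]⟩,
        ⟨22, 210, [1, -4, -103, -210, 11, -1, 1, 0]⟩,
        ⟨150, 252, [1, -9, -7, 1, -3, -4, -5, 1, -3, -1, -7, 9, 1, 0]⟩,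
        ⟨38, 280, [1, -40, -41, 1, 1, 0]⟩, ⟨196, 315, [1, -1, -7, -2, 45, 1, 1, 0]⟩,
        ⟨16, 330, [1, -2, 11, 15, 17, -2, 11, 1, 1, 0]⟩,
        ⟨226, 330, [1, -2, 11, -15, 17, 2, 11, 1, 1, 0]⟩,
        ⟨76, 336, [1, -1, -7, 1, -3, -2, -5, 48, 49, -1, -3, -1, -7, 1, 1, 0]⟩,
        ⟨381, 385, [1, -5, -7, -1, -3, 11, -7, -1, 1, 0]⟩,
        ⟨52, 396, [1, -4, 11, -18, 17, -1, 11, 1, 1, 0]⟩,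
        ⟨238, 462, [1, -1, -77, -2, -7, -11, -3, 7, -33, -2, 1, 0]⟩,
        ⟨192, 630, [1, -3, -7, -30, -29, -1, -7, 90, -29, 3, -7, 1, 1, 0]⟩])] },
  by decide +kernel⟩

theorem exists_certificate_27 : ∃ C : Certificate, C.isValid 27 := ⟨{
    exceptions := [
      (7, [
        1, -1, 4, -15, 232, 31, -206, -25, 67, 6, 79, -33, -116, 45, 157, -16, -2693, -387, 1108,
        103, -239, 83, 286, -29, -71, 6, 13, -1, -2, 1, 13, -6, -71, 29, 286, -83, -239, -103,
        1108, 387, -2693, 16, 157, -45, -116, 33, 79, -6, 67, 25, -206, -31, 232, 15, 4, 1, 1, 0]),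
      (8, [1, -4, 28, -4, -10, 6, 82, -34, -262, -10, 8, -2, 10, 4, -28, 4, -1, 0])]
    families := [
      (1, [⟨0, 1, [1, -1, 1, 0]⟩]),
      (2, [⟨0, 1, [1, -1, 2, 1, 1, 0]⟩]),
      (4, [
        ⟨0, 2, [1, -2, 4, 0]⟩, ⟨0, 3, [1, -3, 4, 1, 1, 0]⟩, ⟨5, 6, [1, -6, 7, 1, 1, 0]⟩,
        ⟨4, 7, [1, -1, 28, 7, 7, 0]⟩, ⟨0, 7, [1, -7, 4, 1, 1, 0]⟩,
        ⟨1, 42, [1, -2, 7, -3, -5, 2, 7, -1, 1, 0]⟩,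
        ⟨19, 42, [1, -1, 7, -6, -5, -1, 7, 1, 1, 0]⟩,
        ⟨13, 42, [1, -2, 7, -6, -5, -1, 7, 2, 1, 0]⟩,
        ⟨31, 42, [1, -1, 7, -1, -5, -6, 7, 1, 1, 0]⟩,
        ⟨37, 42, [1, -2, 7, -1, -5, -6, 7, 2, 1, 0]⟩]),
      (5, [
        ⟨3, 4, [2, -4, -5, 1, 2, 0]⟩, ⟨3, 5, [1, -1, 5, -1, -2, 1, 5, 1, 1, 0]⟩,
        ⟨2, 5, [1, -1, 5, 1, -2, -1, 5, 1, 1, 0]⟩, ⟨0, 5, [1, -5, 5, 0]⟩,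
        ⟨5, 8, [1, -4, 32, 4, 1, 0]⟩, ⟨1, 8, [1, -4, 28, -32, 32, 0]⟩,
        ⟨6, 10, [1, -2, 5, 1, -2, -1, 5, 2, 1, 0]⟩, ⟨4, 10, [1, -2, 5, -1, -2, 1, 5, 2, 1, 0]⟩]),
      (7, [
        ⟨2, 3, [1, -3, 4, 1, 1, 0]⟩, ⟨0, 6, [1, -6, 7, 1, 1, 0]⟩,
        ⟨3, 6, [2, -6, 14, 1, 2, -1, 14, 6, 2, 0]⟩, ⟨5, 7, [1, -7, 4, 1, 1, 0]⟩,
        ⟨0, 7, [1, -7, 7, 0]⟩, ⟨7, 8, [8, -4, 5, 1, 8, -1, 5, 4, 8, 0]⟩,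
        ⟨3, 8, [1, -4, 28, -32, -128, 0]⟩,
        ⟨13, 24, [2, -2, 8, -3, 5, 2, -100, -48, -22, -4, 8, 0]⟩,
        ⟨1, 24, [2, -2, 8, -1, 5, -6, 8, -2, 5, 3, 8, -2, 2, 0]⟩,
        ⟨22, 42, [1, -1, 7, -6, -5, -1, 7, 1, 1, 0]⟩,
        ⟨10, 42, [1, -2, 7, -1, -5, -6, 7, 2, 1, 0]⟩,
        ⟨34, 42, [1, -1, 7, -1, -5, -6, 7, 1, 1, 0]⟩,
        ⟨16, 42, [1, -2, 7, -3, -5, 2, 7, -1, 1, 0]⟩,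
        ⟨4, 42, [1, -2, 7, -6, -5, -1, 7, 2, 1, 0]⟩]),
      (8, [
        ⟨0, 2, [1, -2, 8, 2, 1, 0]⟩, ⟨1, 5, [5, -5, 4, -1, 5, 0]⟩,
        ⟨1, 7, [7, -7, 56, 1, 2, -1, 56, 7, 7, 0]⟩, ⟨0, 7, [1, -7, 8, 1, 1, 0]⟩,
        ⟨0, 9, [1, -9, 8, -1, 1, 0]⟩, ⟨6, 9, [1, -9, -10, 1, 1, 0]⟩,
        ⟨5, 11, [11, -11, -2, -1, 11, 0]⟩, ⟨3, 11, [1, -11, -10, -1, 1, 0]⟩,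
        ⟨0, 15, [1, -15, 8, 1, 1, 0]⟩, ⟨5, 18, [1, -18, 17, -1, 1, 0]⟩,
        ⟨9, 28, [1, -1, 28, 1, 1, 0]⟩, ⟨5, 30, [1, -15, 17, 2, 1, 0]⟩,
        ⟨10, 35, [1, -35, 17, -1, 1, 0]⟩, ⟨25, 36, [1, -36, -37, 1, 1, 0]⟩,
        ⟨13, 40, [1, -1, 8, 1, 10, -1, -1, 0]⟩, ⟨29, 40, [1, -1, 8, 1, 10, 1, -1, 0]⟩,
        ⟨3, 40, [1, -1, 8, -1, 10, 1, -1, 0]⟩, ⟨17, 42, [1, -14, 17, 3, 1, 0]⟩,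
        ⟨13, 45, [1, -45, 44, -1, 1, 0]⟩, ⟨18, 55, [1, -2, 55, 2, 1, 0]⟩,
        ⟨8, 55, [1, -2, -53, -55, 8, 1, 1, 0]⟩, ⟨17, 56, [1, -1, 55, -56, -19, 1, 1, 0]⟩,
        ⟨19, 60, [1, -20, -19, -1, 1, 0]⟩, ⟨39, 60, [1, -20, -19, -1, 1, 0]⟩,
        ⟨44, 63, [1, -63, -64, 1, 1, 0]⟩, ⟨47, 70, [1, -35, -37, 2, 1, 0]⟩,
        ⟨11, 72, [1, -1, 8, -9, 10, 1, 8, 1, 1, 0]⟩, ⟨21, 72, [1, -72, 71, -1, 1, 0]⟩,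
        ⟨67, 72, [1, -1, 8, -1, -19, 18, -17, 1, 8, 1, 1, 0]⟩,
        ⟨41, 84, [1, -21, -19, -2, 1, 0]⟩, ⟨83, 84, [1, -1, 28, 3, -10, -7, 1, 0]⟩,
        ⟨49, 90, [1, -1, -10, -1, 19, 18, 17, 1, -10, 1, 1, 0]⟩,
        ⟨83, 90, [1, -1, -10, -9, -8, -1, -10, 1, 1, 0]⟩, ⟨43, 90, [1, -45, -46, 1, 1, 0]⟩,
        ⟨53, 90, [1, -18, -19, 1, 1, 0]⟩, ⟨29, 90, [1, -1, -10, -1, -8, -9, -10, 1, 1, 0]⟩,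
        ⟨73, 105, [1, -1, -53, 105, 8, 1, 1, 0]⟩, ⟨97, 105, [1, -4, 109, 105, 8, 1, 1, 0]⟩,
        ⟨32, 105, [1, -1, -26, -105, 8, -1, 1, 0]⟩, ⟨89, 105, [1, -2, -107, 105, 8, 1, 1, 0]⟩,
        ⟨37, 108, [1, -36, 35, -1, 1, 0]⟩, ⟨73, 108, [1, -36, 35, -1, 1, 0]⟩,
        ⟨33, 112, [1, -112, -37, -1, 1, 0]⟩, ⟨63, 120, [1, -3, 8, 1, 10, -1, -1, 0]⟩,
        ⟨33, 120, [1, -3, 8, -1, 10, 1, -1, 0]⟩, ⟨87, 120, [1, -3, 8, 1, 10, -3, -1, 0]⟩,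
        ⟨27, 120, [1, -1, 8, -1, 10, 3, -1, 0]⟩, ⟨47, 120, [1, -1, 8, 3, 10, 1, -1, 0]⟩,
        ⟨57, 120, [1, -3, 8, -1, 10, 3, -1, 0]⟩, ⟨9, 120, [1, -3, 8, -1, 10, -1, -1, 0]⟩,
        ⟨37, 126, [1, -126, 125, -1, 1, 0]⟩, ⟨53, 126, [1, -18, -19, 1, 1, 0]⟩,
        ⟨67, 132, [1, -33, 35, 2, 1, 0]⟩, ⟨13, 140, [1, -4, 35, -1, 10, 1, -1, 0]⟩,
        ⟨69, 140, [1, -14, -19, 5, 1, 0]⟩, ⟨73, 144, [1, -72, 35, -2, 1, 0]⟩,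
        ⟨55, 168, [1, -56, -19, 1, 1, 0]⟩,
        ⟨109, 189, [1, -27, 35, 8, -181, 189, -26, 7, 8, -1, 1, 0]⟩,
        ⟨145, 210, [1, -1, 35, -3, 10, 1, -1, 0]⟩, ⟨25, 210, [1, -6, 35, -3, 10, 1, -1, 0]⟩,
        ⟨55, 210, [1, -3, 35, 1, 10, -7, -1, 0]⟩, ⟨37, 210, [1, -4, -107, 210, -19, 1, 1, 0]⟩,
        ⟨67, 210, [1, -1, 35, 3, 10, 1, -1, 0]⟩, ⟨83, 220, [1, -5, 44, -1, -10, 1, 1, 0]⟩,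
        ⟨143, 220, [1, -4, -19, 110, 109, 1, 1, 0]⟩, ⟨175, 264, [1, -11, -19, 8, 1, 0]⟩,
        ⟨79, 264, [1, -1, 8, 3, -44, -1, -1, 0]⟩, ⟨7, 270, [1, -27, -37, 10, 1, 0]⟩,
        ⟨157, 315, [1, -3, 35, -1, 8, -9, -44, 35, 8, -45, -44, -1, 35, -3, 1, 0]⟩,
        ⟨175, 360, [1, -5, 8, -1, -19, 18, -17, 1, 8, 5, 1, 0]⟩,
        ⟨241, 378, [1, -14, 17, 54, -53, 1, 1, 0]⟩, ⟨367, 378, [1, -2, 17, -189, 190, 1, 1, 0]⟩,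
        ⟨229, 462, [1, -231, -46, -1, 1, 0]⟩, ⟨103, 616, [1, -8, -19, 11, 28, -1, 1, 0]⟩,
        ⟨613, 630, [1, -9, 35, -1, 10, 1, -1, 0]⟩,
        ⟨205, 630, [1, -2, -37, 35, -26, 9, -10, -1, 1, 0]⟩,
        ⟨577, 630, [1, -9, 35, -3, 10, -1, -1, 0]⟩]),
      (10, [
        ⟨3, 7, [7, -7, -2, -1, 7, 0]⟩, ⟨4, 7, [1, -7, -8, 1, 1, 0]⟩,
        ⟨3, 9, [1, -9, -8, -1, 1, 0]⟩, ⟨8, 10, [1, -1, 10, 4, -8, 0]⟩,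
        ⟨0, 10, [1, -30, -80, 50, 55, -5, 1, 0]⟩, ⟨5, 10, [1, -5, 55, 50, -125, 0]⟩,
        ⟨4, 10, [1, -2, 10, 4, -8, 0]⟩, ⟨2, 10, [1, -1, 10, -4, -8, 0]⟩,
        ⟨6, 10, [1, -2, 10, -4, -8, 0]⟩, ⟨9, 11, [1, -11, 55, -121, -242, 121, 55, 11, 1, 0]⟩,
        ⟨9, 15, [1, -15, -8, 1, 1, 0]⟩, ⟨9, 18, [1, -9, 10, 1, 1, 0]⟩,
        ⟨11, 18, [1, -18, 19, 1, 1, 0]⟩, ⟨7, 20, [1, -20, 19, -1, 1, 0]⟩,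
        ⟨11, 22, [1, -11, 10, -1, 1, 0]⟩, ⟨9, 28, [1, -1, 28, -1, 1, 0]⟩,
        ⟨13, 36, [1, -36, -35, -1, 1, 0]⟩, ⟨17, 36, [1, -18, -17, -1, 1, 0]⟩,
        ⟨37, 40, [1, -1, 10, 1, -8, 1, 1, 0]⟩, ⟨23, 40, [1, -1, 10, -1, -8, 1, 1, 0]⟩,
        ⟨35, 42, [1, -21, 19, -2, 1, 0]⟩, ⟨28, 45, [1, -45, 46, 1, 1, 0]⟩,
        ⟨35, 48, [1, -16, 19, 3, 1, 0]⟩, ⟨18, 55, [1, -2, 55, -2, 1, 0]⟩,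
        ⟨48, 55, [1, -2, -53, -55, -8, 1, 1, 0]⟩, ⟨41, 56, [1, -1, 19, 56, 55, 1, 1, 0]⟩,
        ⟨35, 56, [1, -56, 19, 1, 1, 0]⟩, ⟨29, 60, [1, -15, -17, 2, 1, 0]⟩,
        ⟨43, 66, [1, -33, -35, 2, 1, 0]⟩, ⟨1, 70, [1, -1, 10, -7, -8, 1, -35, 2, 1, 0]⟩,
        ⟨23, 70, [1, -1, 10, -1, -35, -1, 1, 0]⟩, ⟨35, 72, [1, -36, -17, -2, 1, 0]⟩,
        ⟨23, 72, [1, -1, -8, 1, 10, -9, -8, 1, 1, 0]⟩, ⟨37, 72, [1, -36, 37, 1, 1, 0]⟩,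
        ⟨5, 72, [1, -1, -8, -9, 10, 1, -8, 1, 1, 0]⟩, ⟨59, 80, [1, -3, -80, -1, 1, 0]⟩,
        ⟨83, 88, [1, -11, 19, 8, 1, 0]⟩, ⟨23, 90, [1, -1, 10, -1, -8, -9, 10, 1, 1, 0]⟩,
        ⟨7, 90, [1, -1, 10, 1, -17, 18, 19, -1, 10, 1, 1, 0]⟩,
        ⟨33, 90, [1, -90, -89, -1, 1, 0]⟩, ⟨43, 90, [1, -45, -44, -1, 1, 0]⟩,
        ⟨77, 90, [1, -1, 10, -9, -8, -1, 10, 1, 1, 0]⟩, ⟨71, 90, [1, -18, -17, -1, 1, 0]⟩,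
        ⟨26, 105, [1, -1, -8, -105, -26, -1, 1, 0]⟩, ⟨91, 105, [1, -4, 109, 105, -8, 1, 1, 0]⟩,
        ⟨13, 105, [1, -1, -8, -105, -53, 1, 1, 0]⟩, ⟨34, 105, [1, -35, -17, -1, 1, 0]⟩,
        ⟨57, 120, [1, -1, 10, 1, -8, -3, 1, 0]⟩, ⟨119, 120, [1, -1, 10, -3, -8, -5, 1, 0]⟩,
        ⟨111, 120, [1, -3, 10, -1, -8, 1, 1, 0]⟩, ⟨21, 120, [1, -3, 10, -1, -8, -1, 1, 0]⟩,
        ⟨81, 120, [1, -3, 10, -1, -8, 3, 1, 0]⟩, ⟨51, 120, [1, -3, 10, -1, -8, -3, 1, 0]⟩,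
        ⟨11, 120, [1, -1, 10, 3, -8, 1, 1, 0]⟩, ⟨79, 126, [1, -126, 127, 1, 1, 0]⟩,
        ⟨49, 135, [1, -1, -134, -135, -17, 1, 1, 0]⟩, ⟨94, 135, [1, -5, -8, 27, 28, -1, 1, 0]⟩,
        ⟨37, 180, [1, -36, 37, 1, 1, 0]⟩, ⟨169, 210, [1, -1, 10, -3, -35, 1, 1, 0]⟩,
        ⟨19, 210, [1, -1, 10, -3, -35, 6, 1, 0]⟩, ⟨61, 210, [1, -1, 10, 3, -35, 1, 1, 0]⟩,
        ⟨49, 210, [1, -7, 10, -1, -35, -3, 1, 0]⟩, ⟨121, 210, [1, -4, -107, 210, 19, 1, 1, 0]⟩,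
        ⟨23, 220, [1, -4, 19, 110, 109, 1, 1, 0]⟩, ⟨203, 220, [1, -5, -44, 1, 10, 1, 1, 0]⟩,
        ⟨85, 231, [1, -231, 46, -1, 1, 0]⟩, ⟨91, 264, [1, -1, -44, -3, -8, -1, 1, 0]⟩,
        ⟨286, 315, [1, -3, -35, 1, -44, 45, -8, -35, -44, 9, -8, 1, -35, -3, 1, 0]⟩,
        ⟨247, 378, [1, -126, -125, -1, 1, 0]⟩, ⟨307, 378, [1, -2, -17, -189, 190, 1, 1, 0]⟩,
        ⟨181, 378, [1, -14, -17, 54, -53, 1, 1, 0]⟩, ⟨271, 540, [1, -27, 37, 10, 1, 0]⟩,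
        ⟨211, 616, [1, -1, 28, -11, 19, 8, 1, 0]⟩, ⟨103, 630, [1, -1, 10, -1, -35, 9, 1, 0]⟩,
        ⟨289, 630, [1, -2, 37, 35, -26, 9, 10, -1, 1, 0]⟩,
        ⟨391, 630, [1, -1, 10, 3, -35, -9, 1, 0]⟩]),
      (11, [
        ⟨2, 5, [5, -5, -2, -1, 5, 0]⟩, ⟨4, 5, [1, -1, 5, 1, -2, -1, 5, 1, 1, 0]⟩,
        ⟨0, 5, [1, -1, 5, -1, -2, 1, 5, 1, 1, 0]⟩, ⟨7, 8, [2, -2, 10, 8, 56, 1, 2, 0]⟩,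
        ⟨3, 8, [1, -4, -16, 0]⟩, ⟨8, 10, [1, -2, 5, -1, -2, 1, 5, 2, 1, 0]⟩,
        ⟨6, 10, [1, -2, 5, 1, -2, -1, 5, 2, 1, 0]⟩, ⟨9, 12, [4, -6, -7, 1, 4, -1, -7, 6, 4, 0]⟩,
        ⟨5, 12, [1, -6, -16, 2, 1, 0]⟩, ⟨1, 15, [1, -1, 5, 3, -2, -3, 5, 1, 1, 0]⟩,
        ⟨13, 15, [1, -1, 5, -3, -2, 3, 5, 1, 1, 0]⟩]),
      (13, [⟨0, 1, [1, -1, -2, 1, 1, 0]⟩])] },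
  by decide +kernel⟩

theorem exists_certificate {s : ℕ} (hs : 0 < s) (hs27 : s ≤ 27) (hs24 : s ≠ 24) :
    ∃ C : Certificate, C.isValid s := by
  interval_cases s
  exacts [exists_certificate_1, exists_certificate_2, exists_certificate_3, exists_certificate_4,
    exists_certificate_5, exists_certificate_6, exists_certificate_7, exists_certificate_8,
    exists_certificate_9, exists_certificate_10, exists_certificate_11, exists_certificate_12,
    exists_certificate_13, exists_certificate_14, exists_certificate_15, exists_certificate_16,
    exists_certificate_17, exists_certificate_18, exists_certificate_19, exists_certificate_20,
    exists_certificate_21, exists_certificate_22, exists_certificate_23, absurd rfl hs24,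
    exists_certificate_25, exists_certificate_26, exists_certificate_27]

theorem isRelationNumber_ratCast {q : ℚ} (hq : q ≠ 0) (hq4 : |q| < 4) (hnum27 : q.num.natAbs ≤ 27)
    (hnum24 : q.num.natAbs ≠ 24) : IsRelationNumber q := by
  have hpos : 0 < q.num.natAbs := Int.natAbs_pos.2 (Rat.num_ne_zero.2 hq)
  obtain ⟨C, hC⟩ := exists_certificate hpos hnum27 hnum24
  have abs_eq : |q| = q.num.natAbs / q.den := by
    rw [Rat.abs_def, Rat.divInt_eq_div, Int.cast_natCast, Int.cast_natCast]
  have hlt : (q.num.natAbs : ℤ) < 4 * |(q.den : ℤ)| := by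
    rw [abs_eq, div_lt_iff₀ (mod_cast q.den_pos)] at hq4
    rw [Nat.abs_cast]
    exact_mod_cast hq4
  have isRelationNumber_abs : IsRelationNumber (|q| : ℚ) := by
    rw [abs_eq, Rat.cast_div, Rat.cast_natCast, Rat.cast_natCast]
    exact_mod_cast C.isRelationNumber hC hpos (Nat.isCoprime_iff_coprime.2 q.reduced) hlt
  obtain habs | habs := abs_choice q
  · rwa [habs] at isRelationNumber_abs
  · rw [habs] at isRelationNumber_abs
    simpa using isRelationNumber_neg isRelationNumber_abs

end RelationNumber

theorem stmt0 (s r : ℤ) (hs : s ≠ 0) (hr : r ≠ 0) (hs27 : |s| ≤ 27) (hs24 : |s| ≠ 24)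
    (h1 : -4 < (s : ℚ) / (r : ℚ)) (h2 : (s : ℚ) / (r : ℚ) < 4) :
    IsRelationNumber ((s : ℂ) / (r : ℂ)) := by
  have hq : (s / r : ℚ) ≠ 0 := div_ne_zero (mod_cast hs) (mod_cast hr)
  rw [Int.abs_eq_natAbs] at hs27 hs24
  have num_dvd : (s / r : ℚ).num.natAbs ∣ s.natAbs :=
    Int.natAbs_dvd_natAbs.2 (by simpa only [Rat.divInt_eq_div] using Rat.num_dvd s hr)
  have num_le := Nat.le_of_dvd (Int.natAbs_pos.2 hs) num_dvd
  have num_ne : (s / r : ℚ).num.natAbs ≠ 24 := by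
    intro h
    rw [h] at num_dvd
    omega
  simpa using
    RelationNumber.isRelationNumber_ratCast hq (abs_lt.2 ⟨h1, h2⟩) (by omega) num_ne
end

section
/- Let s be a positive integer with s ≤ 27 and s ≠ 24. Then for all but finitely many nonzero integers r, the rational number s/r is a 2-step relation number. -/
/-!
If `w` is an `s`-good representative modulo `s * m`, then `w * c = s * m * y + g` for some `c`, some
divisor `y` of `m` and `g = ± gcd(w, s * m)`. For `r = w + s * m * k` and `x = y + c * k` this
becomes `c * r = s * m * x + g`; since `g` divides `r`, say `r = g * ρ`, the number `q = s / r`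
solves `q * (ρ * m * x) = c * ρ - 1`. That linear equation makes an explicit two-step word lower
triangular, whose exponents vanish only if `k = 0` or `x = 0`, which excludes at most two members
of the class. It remains to cover `ℤ` by finitely many `s`-good classes: the moduli `s * m` with
`m ∣ 12` suffice for `s ≤ 25` other than `24`, and those with `m ∣ 60` for `s = 26, 27`.
-/

section Words

lemma specialLinearGroup_coe_zpow_of_mul_self_eq_zero {ι R : Type*} [Fintype ι] [DecidableEq ι]
    [CommRing R] {g : Matrix.SpecialLinearGroup ι R} {N : Matrix ι ι R} (hg : g.val = 1 + N)
    (hN : N * N = 0) (n : ℤ) : (g ^ n).val = 1 + n • N := by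
  have hmul (a b : ℤ) : (1 + a • N) * (1 + b • N) = 1 + (a + b) • N := by
    simp only [add_mul, mul_add, one_mul, mul_one, smul_mul_smul_comm, hN, smul_zero, add_smul]
    abel
  have hg_inv : (g⁻¹).val = 1 + (-1 : ℤ) • N := by
    have hg_mul : g.val * (1 + (-1 : ℤ) • N) = 1 := by
      simpa [hg] using hmul 1 (-1)
    have hinv_mul : (g⁻¹).val * g.val = 1 := by
      rw [← Matrix.SpecialLinearGroup.coe_mul, inv_mul_cancel, Matrix.SpecialLinearGroup.coe_one]
    exact left_inv_eq_right_inv hinv_mul hg_mul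
  induction n using Int.induction_on with
  | zero => simp
  | succ n ih =>
    rw [zpow_add_one, Matrix.SpecialLinearGroup.coe_mul, ih, hg, ← hmul, one_smul]
  | pred n ih =>
    rw [zpow_sub_one, Matrix.SpecialLinearGroup.coe_mul, ih, hg_inv, hmul, sub_eq_add_neg]

lemma coe_matA_zpow (n : ℤ) : (matA ^ n).val = !![1, 0; (n : ℂ), 1] := by
  rw [specialLinearGroup_coe_zpow_of_mul_self_eq_zero (N := !![0, 0; 1, 0])]
  · simp [Matrix.one_fin_two]
  · simp [matA, Matrix.one_fin_two]
  · ext i j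
    fin_cases i <;> fin_cases j <;> simp

lemma coe_matB_zpow (q : ℂ) (n : ℤ) : (matB q ^ n).val = !![1, n * q; 0, 1] := by
  rw [specialLinearGroup_coe_zpow_of_mul_self_eq_zero (N := !![0, q; 0, 0])]
  · simp [Matrix.one_fin_two]
  · simp [matB, Matrix.one_fin_two]
  · ext i j
    fin_cases i <;> fin_cases j <;> simp

lemma matB_matA_word_apply_zero_one (q : ℂ) (m₁ m₂ m₃ m₄ m₅ : ℤ) :
    (matB q ^ m₁ * matA ^ m₂ * matB q ^ m₃ * matA ^ m₄ * matB q ^ m₅).val 0 1 =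
      q * (m₁ + m₃ + m₅ + q * (m₁ * m₂ * (m₃ + m₅) + (m₁ + m₃) * m₄ * m₅) +
        q ^ 2 * (m₁ * m₂ * m₃ * m₄ * m₅)) := by
  simp only [Matrix.SpecialLinearGroup.coe_mul, coe_matA_zpow, coe_matB_zpow, Matrix.mul_fin_two,
    Matrix.of_apply, Matrix.cons_val_zero, Matrix.cons_val_one]
  ring

lemma isStepRelationNumber_two_of_word {q : ℂ} {m₁ m₂ m₃ m₄ m₅ : ℤ} (h₁ : m₁ ≠ 0) (h₂ : m₂ ≠ 0)
    (h₃ : m₃ ≠ 0) (h₄ : m₄ ≠ 0) (h₅ : m₅ ≠ 0)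
    (hword : (matB q ^ m₁ * matA ^ m₂ * matB q ^ m₃ * matA ^ m₄ * matB q ^ m₅).val 0 1 = 0) :
    IsStepRelationNumber 2 q := by
  refine ⟨2, le_rfl, ![m₁, m₂, m₃, m₄, m₅], ?_, ?_⟩
  · intro i
    fin_cases i <;> assumption
  · simpa [List.ofFn_succ, Fin.succ, mul_assoc] using hword

lemma isStepRelationNumber_two_of_mul_eq {q : ℂ} {ρ y n c k : ℤ} (hρ : ρ ≠ 0) (hy : y ≠ 0)
    (hn : n ≠ 0) (hk : k ≠ 0) (hx : y + c * k ≠ 0)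
    (hq : q * (ρ * (n * y) * (y + c * k)) = c * ρ - 1) : IsStepRelationNumber 2 q := by
  refine isStepRelationNumber_two_of_word
    (neg_ne_zero.2 (mul_ne_zero hρ hy)) (neg_ne_zero.2 (mul_ne_zero hn hx)) (neg_ne_zero.2 hk)
    (mul_ne_zero hn hy) (mul_ne_zero hρ hx) ?_
  -- With `u := q * ρ * n * y * (y + c * k)` the entry is `q * k * (1 + u) * (c * ρ - 1 - u)`.
  rw [matB_matA_word_apply_zero_one]
  push_cast
  linear_combination (-q * k) * (1 + q * (ρ * (n * y) * (y + c * k))) * hq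

end Words

section GoodRepresentatives

variable {s w m : ℤ}

lemma dvd_of_mul_gcd_dvd_mul_gcd {y : ℤ} (hsm : s * m ≠ 0)
    (h : y * (Int.gcd w (s * m) : ℤ) ∣ m * (Int.gcd w s : ℤ)) : y ∣ m := by
  have hgcd_ne : (Int.gcd w (s * m) : ℤ) ≠ 0 := by
    simp [Int.gcd_eq_zero_iff, hsm]
  have hgcd_dvd : (Int.gcd w s : ℤ) ∣ Int.gcd w (s * m) :=
    Int.dvd_coe_gcd (Int.gcd_dvd_left ..) ((Int.gcd_dvd_right ..).mul_right m)
  exact Int.dvd_of_mul_dvd_mul_right hgcd_ne (h.trans (mul_dvd_mul_left m hgcd_dvd))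

lemma IsGoodRep.exists_mul_eq (hsm : s * m ≠ 0) (h : IsGoodRep s w m) :
    ∃ y c g : ℤ, y ∣ m ∧ g ∣ w ∧ g ∣ s * m ∧ w * c = s * m * y + g := by
  obtain ⟨y, hym, ⟨c, hc⟩ | ⟨c, hc⟩⟩ := h
  · exact ⟨y, c, Int.gcd w (s * m), dvd_of_mul_gcd_dvd_mul_gcd hsm hym, Int.gcd_dvd_left ..,
      Int.gcd_dvd_right .., hc.symm⟩
  · exact ⟨y, c, -Int.gcd w (s * m), dvd_of_mul_gcd_dvd_mul_gcd hsm hym,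
      neg_dvd.2 (Int.gcd_dvd_left ..), neg_dvd.2 (Int.gcd_dvd_right ..), hc.symm⟩

lemma isStepRelationNumber_two_of_mul_eq_add {r y c g k : ℤ} (hr : r ≠ 0) (hm : m ≠ 0)
    (hym : y ∣ m) (hgw : g ∣ w) (hgsm : g ∣ s * m) (hc : w * c = s * m * y + g)
    (hrk : r = w + s * m * k) (hk : k ≠ 0) (hx : y + c * k ≠ 0) :
    IsStepRelationNumber 2 ((s : ℂ) / r) := by
  obtain ⟨n, rfl⟩ := hym
  obtain ⟨ρ, rfl⟩ : g ∣ r := hrk ▸ dvd_add hgw (hgsm.mul_right k)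
  have hcr : c * (g * ρ) = s * (y * n) * (y + c * k) + g := by
    linear_combination c * hrk + hc
  refine isStepRelationNumber_two_of_mul_eq (right_ne_zero_of_mul hr) (left_ne_zero_of_mul hm)
    (right_ne_zero_of_mul hm) hk hx ?_
  have hgC : (g : ℂ) ≠ 0 := Int.cast_ne_zero.2 (left_ne_zero_of_mul hr)
  have hρC : (ρ : ℂ) ≠ 0 := Int.cast_ne_zero.2 (right_ne_zero_of_mul hr)
  have hcrC : (c : ℂ) * (g * ρ) = s * (y * n) * (y + c * k) + g := mod_cast hcr
  push_cast
  field_simp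
  linear_combination -hcrC

lemma finite_setOf_add_mul_eq_zero {R : Type*} [CommRing R] [IsDomain R] {y : R} (hy : y ≠ 0)
    (c : R) : {k : R | y + c * k = 0}.Finite := by
  refine Set.Subsingleton.finite fun k (hk : y + c * k = 0) l (hl : y + c * l = 0) => ?_
  have hc : c ≠ 0 := by
    rintro rfl
    exact hy (by simpa using hk)
  exact mul_left_cancel₀ hc (by linear_combination hk - hl)

lemma IsGoodRep.finite_not_isStepRelationNumber (hs : s ≠ 0) (hm : m ≠ 0)
    (h : IsGoodRep s w m) :
    {r : ℤ | r ≠ 0 ∧ s * m ∣ r - w ∧ ¬ IsStepRelationNumber 2 ((s : ℂ) / r)}.Finite := by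
  obtain ⟨y, c, g, hym, hgw, hgsm, hc⟩ := h.exists_mul_eq (mul_ne_zero hs hm)
  have hy : y ≠ 0 := ne_zero_of_dvd_ne_zero hm hym
  refine (((finite_setOf_add_mul_eq_zero hy c).insert 0).image (w + s * m * ·)).subset ?_
  rintro r ⟨hr, ⟨k, hk⟩, hnot⟩
  have hrk : r = w + s * m * k := by linear_combination hk
  refine ⟨k, ?_, hrk.symm⟩
  by_contra hk_mem
  simp only [Set.mem_insert_iff, Set.mem_ofPred_eq, not_or] at hk_mem
  exact hnot (isStepRelationNumber_two_of_mul_eq_add hr hm hym hgw hgsm hc hrk hk_mem.1 hk_mem.2)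

end GoodRepresentatives

section Covering

lemma finite_not_isStepRelationNumber_of_forall_lt {s : ℤ} {N : ℕ} (hN : N ≠ 0)
    (h : ∀ a < N, ∃ w m : ℤ, s * m ∣ N ∧ s * m ∣ a - w ∧ IsGoodRep s w m) :
    {r : ℤ | r ≠ 0 ∧ ¬ IsStepRelationNumber 2 ((s : ℂ) / r)}.Finite := by
  have hNZ : (N : ℤ) ≠ 0 := Int.natCast_ne_zero.2 hN
  choose! w m hdvd hrep hgood using h
  have hclass (a : ℕ) (ha : a ∈ Set.Iio N) :
      {r : ℤ | r ≠ 0 ∧ s * m a ∣ r - w a ∧ ¬ IsStepRelationNumber 2 ((s : ℂ) / r)}.Finite :=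
    have hsm : s * m a ≠ 0 := ne_zero_of_dvd_ne_zero hNZ (hdvd a ha)
    (hgood a ha).finite_not_isStepRelationNumber (left_ne_zero_of_mul hsm)
      (right_ne_zero_of_mul hsm)
  refine ((Set.finite_Iio N).biUnion hclass).subset ?_
  rintro r ⟨hr, hnot⟩
  obtain ⟨a, ha⟩ := Int.eq_ofNat_of_zero_le (Int.emod_nonneg r hNZ)
  have haN : a < N := by
    have := Int.emod_lt_of_pos r (Int.natCast_pos.2 (Nat.pos_of_ne_zero hN))
    omega
  have hra : (N : ℤ) ∣ r - a := ha ▸ Int.dvd_self_sub_emod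
  refine Set.mem_biUnion haN ⟨hr, ?_, hnot⟩
  rw [← sub_add_sub_cancel r a (w a)]
  exact dvd_add ((hdvd a haN).trans hra) (hrep a haN)

/-- `y` witnesses that `w` is a good representative of `w + smℤ`. Unlike `IsGoodRep`, which
quantifies over `y`, this is decidable. -/
abbrev IsGoodRepWitness (s w m y : ℤ) : Prop :=
  y * (Int.gcd w (s * m) : ℤ) ∣ m * (Int.gcd w s : ℤ) ∧
    (w ∣ s * m * y + (Int.gcd w (s * m) : ℤ) ∨ w ∣ s * m * y - (Int.gcd w (s * m) : ℤ))

/-- Every residue class modulo `s * M` lies in an `s`-good class modulo `s * m` with `m ∣ M`. Only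
the two representatives in `[-s * m, s * m)` are tried for `w` and only positive divisors of `m`
for `y`, which makes this decidable. -/
abbrev HasGoodCover (s M : ℕ) : Prop :=
  ∀ a < s * M, ∃ m ∈ M.divisors, ∃ y ∈ m.divisors,
    ∃ w ∈ [(a % (s * m) : ℤ), a % (s * m) - s * m], IsGoodRepWitness s w m y

lemma HasGoodCover.finite_not_isStepRelationNumber {s M : ℕ} (hs : s ≠ 0) (hM : M ≠ 0)
    (h : HasGoodCover s M) :
    {r : ℤ | r ≠ 0 ∧ ¬ IsStepRelationNumber 2 ((s : ℂ) / r)}.Finite := by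
  suffices ∀ a < s * M, ∃ w m : ℤ, (s : ℤ) * m ∣ (s * M : ℕ) ∧ (s : ℤ) * m ∣ a - w ∧
      IsGoodRep s w m by
    simpa using finite_not_isStepRelationNumber_of_forall_lt (mul_ne_zero hs hM) this
  intro a ha
  obtain ⟨m, hm, y, -, w, hw, hgood⟩ := h a ha
  refine ⟨w, m, mod_cast mul_dvd_mul_left s (Nat.dvd_of_mem_divisors hm), ?_, y, hgood⟩
  have hmod : (s * m : ℤ) ∣ a - a % (s * m) := Int.dvd_self_sub_emod
  simp only [List.mem_cons, List.not_mem_nil, or_false] at hw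
  rcases hw with rfl | rfl
  · exact hmod
  · rw [← sub_add]
    exact dvd_add hmod dvd_rfl

lemma hasGoodCover_twelve : ∀ s ∈ Finset.Icc 1 25, s ≠ 24 → HasGoodCover s 12 := by
  decide +kernel

lemma hasGoodCover_sixty : ∀ s ∈ Finset.Icc 26 27, HasGoodCover s 60 := by
  decide +kernel

end Covering

theorem stmt1 (s : ℕ) (hs : 0 < s) (hs27 : s ≤ 27) (hs24 : s ≠ 24) :
    {r : ℤ | r ≠ 0 ∧ ¬ IsStepRelationNumber 2 ((s : ℂ) / (r : ℂ))}.Finite := by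
  rcases Nat.lt_or_ge 25 s with hlt | hle
  · exact (hasGoodCover_sixty s (Finset.mem_Icc.2 ⟨hlt, hs27⟩)).finite_not_isStepRelationNumber
      hs.ne' (by norm_num)
  · exact (hasGoodCover_twelve s (Finset.mem_Icc.2 ⟨hs, hle⟩) hs24).finite_not_isStepRelationNumber
      hs.ne' (by norm_num)
end
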